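/- arXiv:2107.07422 — 3 statements merged into one kernel-verified Lean document; each statement's English description precedes it below -/
import Mathlib

section
/- Every metric triangle is 4-bi-Lipschitz embeddable in the Euclidean plane: if (Δ, d) is a metric triangle, then there exists a map F : Δ → ℂ such that (1/4)·d(x,y) ≤ |F(x) − F(y)| ≤ 4·d(x,y) for all x, y ∈ Δ. -/
/-!
STATEMENT 0: Every metric triangle is 4-bi-Lipschitz embeddable in the Euclidean plane ℂ.

A metric triangle is a metric space consisting of three points (vertices) and three closed
arcs (edges), each isometric to a compact real interval, connecting the vertices pairwise;
edges are allowed to intersect at interior points.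
-/

/-- A metric triangle: a metric space `Δ` with vertices `p, q, r` and three edges,
each parametrized isometrically by a compact interval `[0, Lᵢ]`, joining the vertices
pairwise, whose union is all of `Δ`. -/
structure MetricTriangle (Δ : Type*) [MetricSpace Δ] where
  p : Δ
  q : Δ
  r : Δ
  L₁ : ℝ
  L₂ : ℝ
  L₃ : ℝ
  hL₁ : 0 ≤ L₁
  hL₂ : 0 ≤ L₂
  hL₃ : 0 ≤ L₃
  e₁ : ℝ → Δ
  e₂ : ℝ → Δ
  e₃ : ℝ → Δ
  iso₁ : ∀ s ∈ Set.Icc 0 L₁, ∀ t ∈ Set.Icc 0 L₁, dist (e₁ s) (e₁ t) = |s - t|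
  iso₂ : ∀ s ∈ Set.Icc 0 L₂, ∀ t ∈ Set.Icc 0 L₂, dist (e₂ s) (e₂ t) = |s - t|
  iso₃ : ∀ s ∈ Set.Icc 0 L₃, ∀ t ∈ Set.Icc 0 L₃, dist (e₃ s) (e₃ t) = |s - t|
  start₁ : e₁ 0 = p
  end₁ : e₁ L₁ = q
  start₂ : e₂ 0 = q
  end₂ : e₂ L₂ = r
  start₃ : e₃ 0 = r
  end₃ : e₃ L₃ = p
  cover : e₁ '' Set.Icc 0 L₁ ∪ e₂ '' Set.Icc 0 L₂ ∪ e₃ '' Set.Icc 0 L₃ = Set.univ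

theorem mt_real (s t y : ℝ) :
    s - t ≤ max (s - y) 0 + max (t - y) 0 + |max (y - s) 0 - max (y - t) 0| ∧
    t - s ≤ max (s - y) 0 + max (t - y) 0 + |max (y - s) 0 - max (y - t) 0| ∧
    s + t - 2 * y ≤ max (s - y) 0 + max (t - y) 0 + |max (y - s) 0 - max (y - t) 0| := by
  have h1 := le_abs_self (max (y - s) 0 - max (y - t) 0)
  have h2 := neg_abs_le (max (y - s) 0 - max (y - t) 0)
  have h3 := abs_nonneg (max (y - s) 0 - max (y - t) 0)
  have a1 := max_zero_sub_eq_self (s - y)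
  have a2 := max_zero_sub_eq_self (t - y)
  have e1 : max (s - y) 0 - max (y - s) 0 = s - y := by
    rw [max_comm, max_comm (y - s)]; simpa [max_comm] using a1
  have e2 : max (t - y) 0 - max (y - t) 0 = t - y := by
    rw [max_comm, max_comm (y - t)]; simpa [max_comm] using a2
  have b1 := le_max_right (s - y) 0
  have b2 := le_max_right (t - y) 0
  have b3 := le_max_left (s - y) 0
  have b4 := le_max_left (t - y) 0
  refine ⟨?_, ?_, ?_⟩ <;> linarith

/-- Key estimate for points on two edges sharing the vertex `q`. -/
theorem mt_key {Δ : Type*} [MetricSpace Δ] (p q r : Δ) (E₁ E₂ E₃ : Set Δ)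
    (c₁ : IsCompact E₁) (c₂ : IsCompact E₂) (c₃ : IsCompact E₃)
    (n₁ : E₁.Nonempty) (n₂ : E₂.Nonempty) (x y z : ℝ)
    (hpq : dist p q = x + y) (hqr : dist q r = y + z)
    (H₁ : ∀ u ∈ E₁, dist u p + dist u q = x + y)
    (H₂ : ∀ u ∈ E₂, dist u q + dist u r = y + z)
    (H₃ : ∀ u ∈ E₃, dist u r + dist u p = z + x)
    (G₁ : ∀ u ∈ E₁, ∀ v ∈ E₁, dist u v = |dist u p - dist v p|)
    (G₂ : ∀ u ∈ E₂, ∀ v ∈ E₂, dist u v = |dist u q - dist v q|)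
    (G₃ : ∀ u ∈ E₃, ∀ v ∈ E₃, dist u v = |dist u r - dist v r|)
    (u v : Δ) (hu : u ∈ E₁) (hv : v ∈ E₂) :
    dist u v ≤ max (x - dist u p) 0 + max (z - dist v r) 0
      + |max (y - dist u q) 0 - max (y - dist v q) 0|
      + 2 * Metric.infDist u (E₂ ∪ E₃) + 2 * Metric.infDist v (E₃ ∪ E₁) := by
  obtain ⟨w, hw, hwd⟩ := (c₂.union c₃).exists_infDist_eq_dist (n₂.mono Set.subset_union_left) u
  obtain ⟨w', hw', hwd'⟩ := (c₃.union c₁).exists_infDist_eq_dist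
    (n₁.mono Set.subset_union_right) v
  rw [hwd, hwd']
  have e1 := H₁ u hu
  have e2 := H₂ v hv
  have d1 : 0 ≤ dist u w := dist_nonneg
  have d2 : 0 ≤ dist v w' := dist_nonneg
  rw [show x - dist u p = dist u q - y by linarith, show z - dist v r = dist v q - y by linarith]
  obtain ⟨D1, D2, D3⟩ := mt_real (dist u q) (dist v q) y
  rcases hw with hw | hw
  · have g := G₂ w hw v hv
    have t1 := dist_triangle u w v
    have t2 := dist_triangle u w q
    have t3 := dist_triangle_left w q u
    rcases abs_cases (dist w q - dist v q) with ⟨h, _⟩ | ⟨h, _⟩ <;> rw [h] at g <;> linarith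
  rcases hw' with hw' | hw'
  · have g := G₃ w hw w' hw'
    have f1 := H₃ w hw
    have f2 := H₃ w' hw'
    have t1 := dist_triangle4 u w w' v
    rw [dist_comm w' v] at t1
    have t2 := dist_triangle u w p
    have t3 := dist_triangle v w' r
    have t4 := dist_triangle u w r
    have t5 := dist_triangle_left q r u
    have t6 := dist_triangle v w' p
    have t7 := dist_triangle_right p q v
    rw [dist_comm p v] at t7
    rw [dist_comm q v] at t7
    rcases abs_cases (dist w r - dist w' r) with ⟨h, _⟩ | ⟨h, _⟩ <;> rw [h] at g <;> linarith
  · have g := G₁ u hu w' hw'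
    have f1 := H₁ w' hw'
    have t1 := dist_triangle_right u v w'
    have t2 := dist_triangle v w' q
    have t3 := dist_triangle_left w' q v
    rcases abs_cases (dist u p - dist w' p) with ⟨h, _⟩ | ⟨h, _⟩ <;> rw [h] at g <;> linarith

/-- The second vertex coordinate vanishes on the opposite edge. -/
theorem mt_opp {Δ : Type*} [MetricSpace Δ] (p q r u : Δ) (x y z : ℝ)
    (hpq : dist p q = x + y) (hrp : dist r p = z + x)
    (h : dist u q + dist u r = y + z) : max (x - dist u p) 0 = 0 := by
  have t1 := dist_triangle_left p q u
  have t2 := dist_triangle_left r p u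
  exact max_eq_right (by linarith)

/-- Combination: some coordinate difference is large. -/
theorem mt_comb (d a b s s' h h' : ℝ) (ha : 0 ≤ a) (hb : 0 ≤ b) (h0 : 0 ≤ h) (h0' : 0 ≤ h')
    (hd : d ≤ a + b + |s - s'| + 2 * h + 2 * h') (P Q R : ℝ)
    (hP : P = 2 / 3 * a + 4 / 3 * h)
    (hQ : Q = 2 / 3 * (s - s') + 4 / 3 * (h - h'))
    (hR : R = - (2 / 3 * b + 4 / 3 * h')) :
    d / 3 ≤ |P - Q| ∨ d / 3 ≤ |Q - R| ∨ d / 3 ≤ |R - P| := by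
  by_contra hc
  push Not at hc
  obtain ⟨h1, h2, h3⟩ := hc
  rw [abs_lt] at h1 h2 h3
  rcases abs_cases (s - s') with ⟨e, _⟩ | ⟨e, _⟩ <;> rw [e] at hd <;> linarith [h1.1, h1.2, h2.1, h2.2, h3.1, h3.2]

noncomputable def mtF (P Q R : ℝ) : ℂ := ⟨P - (Q + R) / 2, (√3 / 2) * (Q - R)⟩

theorem mtF_dist_sq (P Q R P' Q' R' : ℝ) :
    dist (mtF P Q R) (mtF P' Q' R') ^ 2 =
      (((P - P') - (Q - Q')) ^ 2 + ((Q - Q') - (R - R')) ^ 2 + ((R - R') - (P - P')) ^ 2) / 2 := by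
  rw [Complex.dist_eq, ← Complex.normSq_eq_norm_sq, Complex.normSq_apply]
  simp only [mtF, Complex.sub_re, Complex.sub_im]
  have h : √3 * √3 = 3 := Real.mul_self_sqrt (by norm_num)
  linear_combination ((Q - Q') - (R - R')) ^ 2 / 4 * h

theorem mt_upper (D a b c d : ℝ) (hD : D ^ 2 = ((a - b) ^ 2 + (b - c) ^ 2 + (c - a) ^ 2) / 2)
    (hd : 0 ≤ d)
    (h1 : |a - b| ≤ 4 * d) (h2 : |b - c| ≤ 4 * d) (h3 : |c - a| ≤ 4 * d) : D ≤ 4 * d := by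
  apply le_of_sq_le_sq _ (by linarith)
  have k1 := sq_le_sq' (abs_le.1 h1).1 (abs_le.1 h1).2
  have k2 := sq_le_sq' (abs_le.1 h2).1 (abs_le.1 h2).2
  have k3 := sq_le_sq' (abs_le.1 h3).1 (abs_le.1 h3).2
  rw [hD]
  rcases le_total a b with i | i <;> rcases le_total b c with j | j <;>
  rcases le_total c a with k | k <;>
  nlinarith [mul_nonneg (sub_nonneg.2 i) (sub_nonneg.2 j),
    mul_nonneg (sub_nonneg.2 j) (sub_nonneg.2 k), mul_nonneg (sub_nonneg.2 i) (sub_nonneg.2 k)]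

theorem mt_lower (D a b c d : ℝ) (hD : D ^ 2 = ((a - b) ^ 2 + (b - c) ^ 2 + (c - a) ^ 2) / 2)
    (hd : 0 ≤ d) (hD0 : 0 ≤ D)
    (h : d / 3 ≤ |a - b| ∨ d / 3 ≤ |b - c| ∨ d / 3 ≤ |c - a|) : 1 / 4 * d ≤ D := by
  apply le_of_sq_le_sq _ hD0
  rw [hD]
  have hd3 : 0 ≤ d / 3 := by linarith
  rcases h with h | h | h <;> have k := pow_le_pow_left₀ hd3 h 2 <;> rw [sq_abs] at k
  · nlinarith [sq_nonneg (a + b - 2 * c), sq_nonneg d]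
  · nlinarith [sq_nonneg (b + c - 2 * a), sq_nonneg d]
  · nlinarith [sq_nonneg (a + c - 2 * b), sq_nonneg d]

/-- The coordinate functions. -/
noncomputable def mtX {Δ : Type*} [MetricSpace Δ] (p : Δ) (x : ℝ) (A B : Set Δ) (u : Δ) : ℝ :=
  2 / 3 * max (x - dist u p) 0 + 4 / 3 * (Metric.infDist u A + Metric.infDist u B)

theorem mtX_sub {Δ : Type*} [MetricSpace Δ] (p q : Δ) (x y : ℝ) (A B C : Set Δ) (u v : Δ) :
    |(mtX p x A C u - mtX p x A C v) - (mtX q y B A u - mtX q y B A v)| ≤ 4 * dist u v := by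
  have aux : ∀ (p : Δ) (x : ℝ), |max (x - dist u p) 0 - max (x - dist v p) 0| ≤ dist u v := by
    intro p x
    refine (abs_max_sub_max_le_abs _ _ _).trans ?_
    have := abs_dist_sub_le u v p
    rw [abs_sub_comm] at this
    rwa [show x - dist u p - (x - dist v p) = dist v p - dist u p by ring]
  have aux2 : ∀ A : Set Δ, |Metric.infDist u A - Metric.infDist v A| ≤ dist u v := by
    intro A
    have := (Metric.lipschitz_infDist_pt A).dist_le_mul u v
    simpa [Real.dist_eq] using this
  have h1 := abs_le.1 (aux p x)
  have h2 := abs_le.1 (aux q y)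
  have h3 := abs_le.1 (aux2 B)
  have h4 := abs_le.1 (aux2 C)
  unfold mtX
  rw [abs_le]
  constructor <;> linarith [h1.1, h1.2, h2.1, h2.2, h3.1, h3.2, h4.1, h4.2]

/-- Lower bound for points on the same edge. -/
theorem mt_same {Δ : Type*} [MetricSpace Δ] (p q : Δ) (E₁ E₂ E₃ : Set Δ) (x y : ℝ)
    (H₁ : ∀ u ∈ E₁, dist u p + dist u q = x + y)
    (G₁ : ∀ u ∈ E₁, ∀ v ∈ E₁, dist u v = |dist u p - dist v p|)
    (u v : Δ) (hu : u ∈ E₁) (hv : v ∈ E₁) :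
    dist u v / 3 ≤ |(mtX p x (E₂ ∪ E₃) (E₁ ∪ E₂) u - mtX p x (E₂ ∪ E₃) (E₁ ∪ E₂) v)
      - (mtX q y (E₃ ∪ E₁) (E₂ ∪ E₃) u - mtX q y (E₃ ∪ E₁) (E₂ ∪ E₃) v)| := by
  have aux : ∀ u ∈ E₁, mtX p x (E₂ ∪ E₃) (E₁ ∪ E₂) u - mtX q y (E₃ ∪ E₁) (E₂ ∪ E₃) u
      = 2 / 3 * (x - dist u p) := by
    intro u hu
    have z1 := Metric.infDist_zero_of_mem (Set.mem_union_left E₂ hu)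
    have z2 := Metric.infDist_zero_of_mem (Set.mem_union_right E₃ hu)
    unfold mtX
    rw [z1, z2, show y - dist u q = -(x - dist u p) by linarith [H₁ u hu]]
    rcases max_cases (x - dist u p) 0 with ⟨h, _⟩ | ⟨h, _⟩ <;>
    rcases max_cases (-(x - dist u p)) 0 with ⟨h', _⟩ | ⟨h', _⟩ <;> rw [h, h'] <;> linarith
  have a1 := aux u hu
  have a2 := aux v hv
  have : (mtX p x (E₂ ∪ E₃) (E₁ ∪ E₂) u - mtX p x (E₂ ∪ E₃) (E₁ ∪ E₂) v)
      - (mtX q y (E₃ ∪ E₁) (E₂ ∪ E₃) u - mtX q y (E₃ ∪ E₁) (E₂ ∪ E₃) v)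
      = - (2 / 3 * (dist u p - dist v p)) := by linarith
  rw [this, abs_neg, abs_mul, ← G₁ u hu v hv, abs_of_nonneg (by norm_num)]
  linarith [dist_nonneg (x := u) (y := v)]

/-- Lower bound for points on different edges. -/
theorem mt_diff {Δ : Type*} [MetricSpace Δ] (p q r : Δ) (E₁ E₂ E₃ : Set Δ)
    (c₁ : IsCompact E₁) (c₂ : IsCompact E₂) (c₃ : IsCompact E₃)
    (n₁ : E₁.Nonempty) (n₂ : E₂.Nonempty) (x y z : ℝ)
    (hpq : dist p q = x + y) (hqr : dist q r = y + z) (hrp : dist r p = z + x)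
    (H₁ : ∀ u ∈ E₁, dist u p + dist u q = x + y)
    (H₂ : ∀ u ∈ E₂, dist u q + dist u r = y + z)
    (H₃ : ∀ u ∈ E₃, dist u r + dist u p = z + x)
    (G₁ : ∀ u ∈ E₁, ∀ v ∈ E₁, dist u v = |dist u p - dist v p|)
    (G₂ : ∀ u ∈ E₂, ∀ v ∈ E₂, dist u v = |dist u q - dist v q|)
    (G₃ : ∀ u ∈ E₃, ∀ v ∈ E₃, dist u v = |dist u r - dist v r|)
    (u v : Δ) (hu : u ∈ E₁) (hv : v ∈ E₂) (P Q R : ℝ)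
    (hP : P = mtX p x (E₂ ∪ E₃) (E₁ ∪ E₂) u - mtX p x (E₂ ∪ E₃) (E₁ ∪ E₂) v)
    (hQ : Q = mtX q y (E₃ ∪ E₁) (E₂ ∪ E₃) u - mtX q y (E₃ ∪ E₁) (E₂ ∪ E₃) v)
    (hR : R = mtX r z (E₁ ∪ E₂) (E₃ ∪ E₁) u - mtX r z (E₁ ∪ E₂) (E₃ ∪ E₁) v) :
    dist u v / 3 ≤ |P - Q| ∨ dist u v / 3 ≤ |Q - R| ∨ dist u v / 3 ≤ |R - P| := by
  have key := mt_key p q r E₁ E₂ E₃ c₁ c₂ c₃ n₁ n₂ x y z hpq hqr H₁ H₂ H₃ G₁ G₂ G₃ u v hu hv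
  have z1 := Metric.infDist_zero_of_mem (Set.mem_union_left E₂ hu)
  have z2 := Metric.infDist_zero_of_mem (Set.mem_union_right E₃ hu)
  have z3 := Metric.infDist_zero_of_mem (Set.mem_union_left E₃ hv)
  have z4 := Metric.infDist_zero_of_mem (Set.mem_union_right E₁ hv)
  have o1 := mt_opp p q r v x y z hpq hrp (H₂ v hv)
  have o2 := mt_opp r p q u z x y hrp hqr (H₁ u hu)
  unfold mtX at hP hQ hR
  rw [z1, o1, z3, z4] at hP
  rw [z2, z3] at hQ
  rw [z1, o2, z2, z4] at hR
  refine mt_comb _ _ _ _ _ _ _ (le_max_right _ _) (le_max_right _ _) Metric.infDist_nonneg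
    Metric.infDist_nonneg key P Q R ?_ ?_ ?_
  · rw [hP]; ring
  · rw [hQ]; ring
  · rw [hR]; ring

/-- Facts about an isometrically parametrized edge. -/
theorem mt_edge {Δ : Type*} [MetricSpace Δ] (p q : Δ) (L : ℝ) (hL : 0 ≤ L) (e : ℝ → Δ)
    (iso : ∀ s ∈ Set.Icc 0 L, ∀ t ∈ Set.Icc 0 L, dist (e s) (e t) = |s - t|)
    (h0 : e 0 = p) (h1 : e L = q) :
    IsCompact (e '' Set.Icc 0 L) ∧ (e '' Set.Icc 0 L).Nonempty ∧ dist p q = L ∧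
    (∀ u ∈ e '' Set.Icc 0 L, dist u p + dist u q = L) ∧
    (∀ u ∈ e '' Set.Icc 0 L, ∀ v ∈ e '' Set.Icc 0 L, dist u v = |dist u p - dist v p|) := by
  have m0 : (0 : ℝ) ∈ Set.Icc 0 L := ⟨le_rfl, hL⟩
  have m1 : L ∈ Set.Icc 0 L := ⟨hL, le_rfl⟩
  have hp : ∀ s ∈ Set.Icc 0 L, dist (e s) p = s := by
    intro s hs
    rw [← h0, iso s hs 0 m0, sub_zero, abs_of_nonneg hs.1]
  refine ⟨?_, ⟨_, Set.mem_image_of_mem _ m0⟩, ?_, ?_, ?_⟩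
  · apply isCompact_Icc.image_of_continuousOn
    have : LipschitzOnWith 1 e (Set.Icc 0 L) := by
      apply LipschitzOnWith.of_dist_le_mul
      intro s hs t ht
      rw [iso s hs t ht, Real.dist_eq]; simp
    exact this.continuousOn
  · rw [dist_comm, ← h1]; exact hp L m1
  · rintro _ ⟨s, hs, rfl⟩
    rw [hp s hs, ← h1, iso s hs L m1, abs_of_nonpos (by linarith [hs.2])]
    ring
  · rintro _ ⟨s, hs, rfl⟩ _ ⟨t, ht, rfl⟩
    rw [hp s hs, hp t ht, iso s hs t ht]

/-- Every metric triangle is `4`-bi-Lipschitz embeddable in the Euclidean plane `ℂ`: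
there is a map `F : Δ → ℂ` with `(1/4)·d(x,y) ≤ |F x - F y| ≤ 4·d(x,y)` for all `x, y`. -/
theorem metricTriangle_biLipschitz_embeddable {Δ : Type*} [MetricSpace Δ]
    (T : MetricTriangle Δ) :
    ∃ F : Δ → ℂ, ∀ x y : Δ,
      (1 / 4) * dist x y ≤ dist (F x) (F y) ∧ dist (F x) (F y) ≤ 4 * dist x y := by
  obtain ⟨p, q, r, L₁, L₂, L₃, hL₁, hL₂, hL₃, e₁, e₂, e₃, iso₁, iso₂, iso₃, s₁, t₁, s₂, t₂,
    s₃, t₃, cover⟩ := T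
  obtain ⟨c₁, n₁, hpq, H₁, G₁⟩ := mt_edge p q L₁ hL₁ e₁ iso₁ s₁ t₁
  obtain ⟨c₂, n₂, hqr, H₂, G₂⟩ := mt_edge q r L₂ hL₂ e₂ iso₂ s₂ t₂
  obtain ⟨c₃, n₃, hrp, H₃, G₃⟩ := mt_edge r p L₃ hL₃ e₃ iso₃ s₃ t₃
  generalize e₁ '' Set.Icc 0 L₁ = E₁ at *
  generalize e₂ '' Set.Icc 0 L₂ = E₂ at *
  generalize e₃ '' Set.Icc 0 L₃ = E₃ at *
  obtain ⟨x, y, z, hx, hy, hz⟩ : ∃ x y z : ℝ, L₁ = x + y ∧ L₂ = y + z ∧ L₃ = z + x :=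
    ⟨(L₁ + L₃ - L₂) / 2, (L₁ + L₂ - L₃) / 2, (L₂ + L₃ - L₁) / 2, by ring, by ring, by ring⟩
  rw [hx] at hpq H₁
  rw [hy] at hqr H₂
  rw [hz] at hrp H₃
  refine ⟨fun u => mtF (mtX p x (E₂ ∪ E₃) (E₁ ∪ E₂) u) (mtX q y (E₃ ∪ E₁) (E₂ ∪ E₃) u)
    (mtX r z (E₁ ∪ E₂) (E₃ ∪ E₁) u), fun u v => ⟨?_, ?_⟩⟩
  swap
  · exact mt_upper _ _ _ _ _ (mtF_dist_sq _ _ _ _ _ _) dist_nonneg (mtX_sub _ _ _ _ _ _ _ _ _)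
      (mtX_sub _ _ _ _ _ _ _ _ _) (mtX_sub _ _ _ _ _ _ _ _ _)
  have d12 := mt_diff p q r E₁ E₂ E₃ c₁ c₂ c₃ n₁ n₂ x y z hpq hqr hrp H₁ H₂ H₃ G₁ G₂ G₃
  have d23 := mt_diff q r p E₂ E₃ E₁ c₂ c₃ c₁ n₂ n₃ y z x hqr hrp hpq H₂ H₃ H₁ G₂ G₃ G₁
  have d31 := mt_diff r p q E₃ E₁ E₂ c₃ c₁ c₂ n₃ n₁ z x y hrp hpq hqr H₃ H₁ H₂ G₃ G₁ G₂
  have hu : u ∈ E₁ ∪ E₂ ∪ E₃ := by rw [cover]; trivial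
  have hv : v ∈ E₁ ∪ E₂ ∪ E₃ := by rw [cover]; trivial
  have low : ∀ u v, (dist u v / 3 ≤ _ ∨ dist u v / 3 ≤ _ ∨ dist u v / 3 ≤ _) → _ := fun u v h =>
    mt_lower _ _ _ _ (dist u v)
      (mtF_dist_sq (mtX p x (E₂ ∪ E₃) (E₁ ∪ E₂) u) (mtX q y (E₃ ∪ E₁) (E₂ ∪ E₃) u)
    (mtX r z (E₁ ∪ E₂) (E₃ ∪ E₁) u) (mtX p x (E₂ ∪ E₃) (E₁ ∪ E₂) v) (mtX q y (E₃ ∪ E₁) (E₂ ∪ E₃) v)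
    (mtX r z (E₁ ∪ E₂) (E₃ ∪ E₁) v)) dist_nonneg dist_nonneg h
  rcases hu with (hu | hu) | hu <;> rcases hv with (hv | hv) | hv
  · exact low u v (Or.inl (mt_same p q E₁ E₂ E₃ x y H₁ G₁ u v hu hv))
  · exact low u v (d12 u v hu hv _ _ _ rfl rfl rfl)
  · rw [dist_comm u v, dist_comm (mtF _ _ _)]
    exact low v u (or_rotate.1 (d31 v u hv hu _ _ _ rfl rfl rfl))
  · rw [dist_comm u v, dist_comm (mtF _ _ _)]
    exact low v u (d12 v u hv hu _ _ _ rfl rfl rfl)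
  · exact low u v (Or.inr (Or.inl (mt_same q r E₂ E₃ E₁ y z H₂ G₂ u v hu hv)))
  · exact low u v (or_rotate.1 (or_rotate.1 (d23 u v hu hv _ _ _ rfl rfl rfl)))
  · exact low u v (or_rotate.1 (d31 u v hu hv _ _ _ rfl rfl rfl))
  · rw [dist_comm u v, dist_comm (mtF _ _ _)]
    exact low v u (or_rotate.1 (or_rotate.1 (d23 v u hv hu _ _ _ rfl rfl rfl)))
  · exact low u v (Or.inr (Or.inr (mt_same r p E₃ E₁ E₂ z x H₃ G₃ u v hu hv)))
end

section
/- For every planar polygonal disk P ⊂ ℂ and every ε > 0 there exists a finite decomposition {P_k}_{k ∈ K} of P into non-overlapping polygonal disks such that: (i) ℓ(∂P_k) < ε for each k ∈ K; (ii) any two points x, y ∈ ⋃_{k ∈ K} ∂P_k can be joined by a path contained in ⋃_{k ∈ K} ∂P_k of length at most ℓ(∂P); and (iii) Σ_{k ∈ K} ℓ(∂P_k)² ≤ 17·H²(P). -/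
open MeasureTheory Metric
open scoped ENNReal

/-!
STATEMENT 3: Decomposition of a planar polygonal disk into small non-overlapping polygonal
disks with controlled boundary lengths.

A planar polygonal disk is a compact subset `P ⊆ ℂ` homeomorphic to a closed disk whose
topological boundary is a polygon: a union of finitely many non-degenerate straight line
segments that pairwise overlap at most at their endpoints (their relative interiors, the
corresponding open segments, are disjoint).  Lengths of boundaries are measured by the
Hausdorff 1-measure `μH[1]`, and the area `H²(P)` by Lebesgue measure (with which the
normalized Hausdorff 2-measure on the plane coincides).
-/

/-- A planar polygonal disk: a compact set homeomorphic to a closed disk whose topological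
boundary is the union of finitely many non-overlapping straight line segments. -/
def IsPolygonalDisk (P : Set ℂ) : Prop :=
  IsCompact P ∧ Nonempty (↥P ≃ₜ ↥(Metric.closedBall (0 : ℂ) 1)) ∧
    ∃ E : Finset (ℂ × ℂ),
      (∀ e ∈ E, e.1 ≠ e.2) ∧
      frontier P = ⋃ e ∈ E, segment ℝ e.1 e.2 ∧
      ∀ e ∈ E, ∀ e' ∈ E, e ≠ e' →
        openSegment ℝ e.1 e.2 ∩ openSegment ℝ e'.1 e'.2 = ∅

/-! ### Part 1: invariance of domain in the plane -/

/-- There is no continuous logarithm on the unit circle. -/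
lemma no_log_circle (g : ℂ → ℂ) (hg : Continuous g)
    (h : ∀ z ∈ sphere (0 : ℂ) 1, Complex.exp (g z) = z) : False := by
  have hz : ∀ θ : ℝ, Complex.exp (θ * Complex.I) ∈ sphere (0 : ℂ) 1 := by
    intro θ
    simp [Complex.norm_exp_ofReal_mul_I]
  let k : ℝ → ℝ := fun θ => ((g (Complex.exp (θ * Complex.I))).im - θ) / (2 * Real.pi)
  have hk : Continuous k := by fun_prop
  have hintr : ∀ θ, ∃ n : ℤ, k θ = n := by
    intro θ
    have h1 := h _ (hz θ)
    rw [Complex.exp_eq_exp_iff_exists_int] at h1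
    obtain ⟨n, hn⟩ := h1
    refine ⟨n, ?_⟩
    have h2 := congrArg Complex.im hn
    simp at h2
    simp only [k]
    rw [h2]
    field_simp
    ring
  have hper : k (2 * Real.pi) = k 0 - 1 := by
    simp only [k]
    have : Complex.exp (((2 * Real.pi : ℝ) : ℂ) * Complex.I) = 1 := by
      push_cast
      exact Complex.exp_two_pi_mul_I
    rw [this]
    simp
    have := Real.pi_pos
    field_simp
  have hmem : k 0 - 1 / 2 ∈ Set.Icc (k (2 * Real.pi)) (k 0) := by
    rw [hper]
    constructor <;> linarith
  obtain ⟨θ, -, hθ⟩ := intermediate_value_Icc' (by positivity : (0 : ℝ) ≤ 2 * Real.pi)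
    hk.continuousOn hmem
  obtain ⟨n, hn⟩ := hintr θ
  obtain ⟨m, hm⟩ := hintr 0
  rw [hn, hm] at hθ
  have : (2 * n : ℝ) = 2 * m - 1 := by linarith
  have : 2 * n = 2 * m - 1 := by exact_mod_cast this
  omega

/-- A nowhere zero map of the plane cannot be close to the identity on the unit circle. -/
lemma no_nonvanishing (K : ℂ → ℂ) (hK : Continuous K) (hne : ∀ z, K z ≠ 0)
    (hcl : ∀ z ∈ sphere (0 : ℂ) 1, ‖K z - z‖ < 1) : False := by
  obtain ⟨F, ⟨-, hF⟩, -⟩ := Complex.isCoveringMapOn_exp.existsUnique_continuousMap_lifts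
    (⟨K, hK⟩ : C(ℂ, ℂ)) (a₀ := 0) (e₀ := Complex.log (K 0)) (Complex.exp_log (hne 0))
    (fun a => hne a)
  have hF' : ∀ z, Complex.exp (F z) = K z := fun z => congrFun hF z
  have hslit : ∀ z ∈ sphere (0 : ℂ) 1, K z / z ∈ Complex.slitPlane := by
    intro z hz
    have hz1 : ‖z‖ = 1 := by simpa using hz
    have hz0 : z ≠ 0 := by
      rintro rfl
      simp at hz1
    suffices hs : ‖K z / z - 1‖ < 1 by
      simpa using Complex.mem_slitPlane_of_norm_lt_one hs
    have : K z / z - 1 = (K z - z) / z := by field_simp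
    rw [this, norm_div, hz1, div_one]
    exact hcl z hz
  have hcont : ContinuousOn (fun z => F z - Complex.log (K z / z)) (sphere (0 : ℂ) 1) := by
    refine F.continuous.continuousOn.sub (ContinuousOn.clog ?_ hslit)
    refine hK.continuousOn.div continuousOn_id ?_
    intro z hz h0
    have : z = 0 := h0
    simp [this] at hz
  obtain ⟨g, hg⟩ := ContinuousMap.exists_restrict_eq (isClosed_sphere (x := (0 : ℂ)) (ε := 1))
    ⟨_, hcont.domRestrict⟩
  refine no_log_circle g g.continuous ?_
  intro z hz
  have h1 : g z = F z - Complex.log (K z / z) := congrArg (fun f => f ⟨z, hz⟩) hg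
  have hz0 : z ≠ 0 := by
    rintro rfl
    simp at hz
  rw [h1, Complex.exp_sub, hF', Complex.exp_log (div_ne_zero (hne z) hz0)]
  have := hne z
  field_simp

/-- Invariance of domain, normalized. -/
lemma invariance_unit (h : ℂ → ℂ) (hc : ContinuousOn h (closedBall 0 1))
    (hi : Set.InjOn h (closedBall 0 1)) : h 0 ∈ interior (h '' closedBall 0 1) := by
  by_contra hintr
  set P := h '' closedBall (0 : ℂ) 1 with hP
  have hPc : IsCompact P := (isCompact_closedBall _ _).image_of_continuousOn hc
  have h0mem : (0 : ℂ) ∈ closedBall (0 : ℂ) 1 := by simp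
  -- continuous extension of the inverse
  obtain ⟨G, hG⟩ : ∃ G : C(ℂ, ℂ), ∀ z ∈ closedBall (0 : ℂ) 1, G (h z) = z := by
    let e : closedBall (0 : ℂ) 1 → ℂ := Set.domRestrict _ h
    have he : Topology.IsClosedEmbedding e :=
      (Continuous.isClosedEmbedding hc.domRestrict (Set.injOn_iff_injective.1 hi))
    obtain ⟨G, hG⟩ := ContinuousMap.exists_extension (Y := ℂ) he
      ⟨Subtype.val, continuous_subtype_val⟩
    exact ⟨G, fun z hz => congrArg (fun f => f ⟨z, hz⟩) hG⟩
  have hG0 : G (h 0) = 0 := hG 0 h0mem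
  obtain ⟨η, hη, hηG⟩ : ∃ η > 0, ∀ y, dist y (h 0) < η → ‖G y‖ < 1 / 4 := by
    have := Metric.continuous_iff.1 G.continuous (h 0) (1 / 4) (by norm_num)
    simpa [hG0] using this
  set ε := η / 3 with hε
  have hε0 : 0 < ε := by positivity
  obtain ⟨c, hcP, hcd⟩ : ∃ c, c ∉ P ∧ dist c (h 0) < ε := by
    by_contra! hcon
    apply hintr
    rw [mem_interior_iff_mem_nhds, Metric.mem_nhds_iff]
    refine ⟨ε, hε0, fun y hy => ?_⟩
    by_contra hyP
    exact absurd (mem_ball.1 hy) (not_lt.2 (hcon y hyP))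
  let S1 := P \ ball c ε
  have hS1c : IsCompact S1 := hPc.diff isOpen_ball
  have hGS1 : ∀ y ∈ S1, G y ≠ 0 := by
    rintro y ⟨⟨z, hz, rfl⟩, hyb⟩ h0
    rw [hG z hz] at h0
    subst h0
    exact hyb (by simpa [dist_comm] using hcd)
  obtain ⟨δ, hδ, hδ1, hδS⟩ : ∃ δ > 0, δ ≤ 1 / 4 ∧ ∀ y ∈ S1, δ ≤ ‖G y‖ := by
    rcases S1.eq_empty_or_nonempty with hemp | hne
    · exact ⟨1 / 4, by norm_num, le_rfl, by simp [hemp]⟩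
    · obtain ⟨y, hy, hmin⟩ := hS1c.exists_isMinOn hne
        (f := fun y => ‖G y‖) (by fun_prop)
      refine ⟨min (1 / 4) ‖G y‖, lt_min (by norm_num) (norm_pos_iff.2 (hGS1 y hy)),
        min_le_left _ _, fun y' hy' => (min_le_right _ _).trans (hmin hy')⟩
  obtain ⟨g, hg, hgG, -⟩ := G.continuous.exists_contDiff_approx 1 (ε := fun _ => δ / 4)
    continuous_const (fun _ => by positivity)
  have hcurve : ContDiff ℝ 1 (fun θ : ℝ => g (c + ε * Complex.exp (θ * Complex.I))) := by
    refine (hg.of_le (by simp)).comp ?_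
    refine contDiff_const.add (contDiff_const.mul ?_)
    refine ContDiff.cexp ?_
    exact Complex.ofRealCLM.contDiff.mul contDiff_const
  obtain ⟨w, hw, hwd⟩ := (hcurve.dense_compl_range_of_finrank_lt_finrank
    (by simp [Complex.finrank_real_complex])).exists_dist_lt 0 (ε := δ / 4) (by positivity)
  have hw' : ‖w‖ < δ / 4 := by simpa [dist_comm] using hwd
  have hgw : ∀ y, ‖(g y - w) - G y‖ < δ / 2 := by
    intro y
    have h1 : ‖g y - G y‖ < δ / 4 := by
      rw [← dist_eq_norm]; exact hgG y
    calc ‖(g y - w) - G y‖ = ‖(g y - G y) - w‖ := by ring_nf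
      _ ≤ ‖g y - G y‖ + ‖w‖ := norm_sub_le _ _
      _ < δ / 2 := by linarith
  let Φ : ℂ → ℂ := fun y => c + (max (ε / ‖y - c‖) 1 : ℝ) * (y - c)
  have hΦ1 : ∀ y, ε ≤ ‖y - c‖ → Φ y = y := by
    intro y hy
    have : max (ε / ‖y - c‖) 1 = 1 := by
      apply max_eq_right
      apply div_le_one_of_le₀ hy (norm_nonneg _)
    simp [Φ, this]
  have hΦ2 : ∀ y, y ≠ c → ‖y - c‖ < ε → ‖Φ y - c‖ = ε := by
    intro y hyc hy
    have hpos : 0 < ‖y - c‖ := norm_pos_iff.2 (sub_ne_zero.2 hyc)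
    have : max (ε / ‖y - c‖) 1 = ε / ‖y - c‖ := by
      apply max_eq_left
      rw [le_div_iff₀ hpos]; linarith
    have h2 : Φ y - c = ((ε / ‖y - c‖ : ℝ) : ℂ) * (y - c) := by
      simp only [Φ, this]; ring
    rw [h2, norm_mul, Complex.norm_real, Real.norm_of_nonneg (by positivity)]
    field_simp
  have hΦc : ContinuousOn Φ {c}ᶜ := by
    have : ContinuousOn (fun y => max (ε / ‖y - c‖) 1) {c}ᶜ := by
      refine ContinuousOn.sup ?_ continuousOn_const
      refine continuousOn_const.div (by fun_prop) ?_
      intro y hy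
      exact norm_ne_zero_iff.2 (sub_ne_zero.2 hy)
    refine continuousOn_const.add (ContinuousOn.mul ?_ (by fun_prop))
    exact Complex.continuous_ofReal.comp_continuousOn this
  let r : ℂ → ℂ := fun z => ((max 1 ‖z‖ : ℝ) : ℂ)⁻¹ * z
  have hm : ∀ z : ℂ, 0 < max 1 ‖z‖ := fun z => lt_max_of_lt_left one_pos
  have hr : Continuous r := by
    refine Continuous.mul (Continuous.inv₀ (by fun_prop) ?_) continuous_id
    intro z
    exact_mod_cast (hm z).ne'
  have hrb : ∀ z, r z ∈ closedBall (0 : ℂ) 1 := by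
    intro z
    simp only [r, mem_closedBall_zero_iff, norm_mul, norm_inv, Complex.norm_real]
    rw [Real.norm_of_nonneg (hm z).le, inv_mul_le_iff₀ (hm z)]
    simp
  have hrs : ∀ z ∈ sphere (0 : ℂ) 1, r z = z := by
    intro z hz
    have : ‖z‖ = 1 := by simpa using hz
    simp [r, this]
  have hhr : Continuous fun z => h (r z) := hc.comp_continuous hr hrb
  have hhrP : ∀ z, h (r z) ∈ P := fun z => ⟨_, hrb z, rfl⟩
  have hhrc : ∀ z, h (r z) ≠ c := fun z heq => hcP (heq ▸ hhrP z)
  refine no_nonvanishing (fun z => g (Φ (h (r z))) - w) ?_ ?_ ?_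
  · exact (hg.continuous.comp (hΦc.comp_continuous hhr hhrc)).sub continuous_const
  · intro z h0
    by_cases hfar : ε ≤ ‖h (r z) - c‖
    · simp only [hΦ1 _ hfar] at h0
      have h1 := hgw (h (r z))
      rw [h0, zero_sub, norm_neg] at h1
      have h2 := hδS (h (r z)) ⟨hhrP z, by simpa [dist_eq_norm] using hfar⟩
      linarith
    · have h1 := hΦ2 _ (hhrc z) (not_le.1 hfar)
      apply hw
      refine ⟨Complex.arg (Φ (h (r z)) - c), ?_⟩
      have h2 := Complex.norm_mul_exp_arg_mul_I (Φ (h (r z)) - c)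
      rw [h1] at h2
      simp only [h2, add_sub_cancel]
      exact sub_eq_zero.1 h0
  · intro z hz
    have hrz := hrs z hz
    have hz1 : ‖z‖ = 1 := by simpa using hz
    have hzb : z ∈ closedBall (0 : ℂ) 1 := sphere_subset_closedBall hz
    simp only [hrz]
    have hfar : ε ≤ ‖h z - c‖ := by
      by_contra hlt
      have : dist (h z) (h 0) < η := by
        have h1 : dist (h z) c < ε := by rw [dist_eq_norm]; exact not_le.1 hlt
        have h2 := dist_triangle (h z) c (h 0)
        linarith
      have := hηG _ this
      rw [hG z hzb, hz1] at this
      norm_num at this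
    rw [hΦ1 _ hfar]
    have := hgw (h z)
    rw [hG z hzb] at this
    linarith

/-- Invariance of domain. -/
lemma invariance_ball (h : ℂ → ℂ) (a : ℂ) (r : ℝ) (hr : 0 < r)
    (hc : ContinuousOn h (closedBall a r))
    (hi : Set.InjOn h (closedBall a r)) : h a ∈ interior (h '' closedBall a r) := by
  have hmaps : Set.MapsTo (fun z : ℂ => a + r * z) (closedBall 0 1) (closedBall a r) := by
    intro z hz
    have : ‖z‖ ≤ 1 := by simpa using hz
    simp only [mem_closedBall, dist_eq_norm, add_sub_cancel_left, norm_mul, Complex.norm_real,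
      Real.norm_of_nonneg hr.le]
    nlinarith
  have h1 := invariance_unit (fun z => h (a + r * z)) (hc.comp (by fun_prop) hmaps) (by
    intro x hx y hy hxy
    have := hi (hmaps hx) (hmaps hy) hxy
    have hr' : (r : ℂ) ≠ 0 := by exact_mod_cast hr.ne'
    simpa [hr'] using this)
  simp only [mul_zero, add_zero] at h1
  refine interior_mono ?_ h1
  rintro _ ⟨z, hz, rfl⟩
  exact ⟨_, hmaps hz, rfl⟩

/-- Boundary structure of a planar topological disk. -/
lemma disk_structure (P : Set ℂ) (hne : Nonempty (↥P ≃ₜ ↥(Metric.closedBall (0 : ℂ) 1)))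
    (hPc : IsCompact P) :
    ∃ h : ℂ → ℂ, ContinuousOn h (closedBall 0 1) ∧ Set.InjOn h (closedBall 0 1) ∧
      h '' sphere 0 1 = frontier P ∧ P ⊆ closure (interior P) ∧ (interior P).Nonempty := by
  classical
  obtain ⟨e⟩ := hne
  let h : ℂ → ℂ := fun z => if hz : z ∈ closedBall (0 : ℂ) 1 then (e.symm ⟨z, hz⟩ : ℂ) else 0
  let φ : ℂ → ℂ := fun z => if hz : z ∈ P then (e ⟨z, hz⟩ : ℂ) else 0
  have hh : ∀ z (hz : z ∈ closedBall (0 : ℂ) 1), h z = e.symm ⟨z, hz⟩ := fun z hz => dif_pos hz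
  have hφ : ∀ z (hz : z ∈ P), φ z = e ⟨z, hz⟩ := fun z hz => dif_pos hz
  have hhc : ContinuousOn h (closedBall 0 1) := by
    rw [continuousOn_iff_continuous_domRestrict]
    have : (closedBall (0 : ℂ) 1).domRestrict h = fun z => (e.symm z : ℂ) := by
      ext z
      exact hh z z.2
    rw [this]
    fun_prop
  have hφc : ContinuousOn φ P := by
    rw [continuousOn_iff_continuous_domRestrict]
    have : P.domRestrict φ = fun z => (e z : ℂ) := by
      ext z
      exact hφ z z.2
    rw [this]
    fun_prop
  have hhP : ∀ z ∈ closedBall (0 : ℂ) 1, h z ∈ P := by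
    intro z hz
    rw [hh z hz]
    exact Subtype.coe_prop _
  have hφB : ∀ z ∈ P, φ z ∈ closedBall (0 : ℂ) 1 := by
    intro z hz
    rw [hφ z hz]
    exact Subtype.coe_prop _
  have hφh : ∀ z ∈ closedBall (0 : ℂ) 1, φ (h z) = z := by
    intro z hz
    rw [hφ _ (hhP z hz)]
    simp [hh z hz]
  have hhφ : ∀ z ∈ P, h (φ z) = z := by
    intro z hz
    rw [hh _ (hφB z hz)]
    simp [hφ z hz]
  have hhi : Set.InjOn h (closedBall 0 1) := by
    intro x hx y hy hxy
    rw [← hφh x hx, hxy, hφh y hy]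
  have hφi : Set.InjOn φ P := by
    intro x hx y hy hxy
    rw [← hhφ x hx, hxy, hhφ y hy]
  have hin : ∀ z ∈ ball (0 : ℂ) 1, h z ∈ interior P := by
    intro z hz
    obtain ⟨r, hr, hrs⟩ := Metric.nhds_basis_closedBall.mem_iff.1 (isOpen_ball.mem_nhds hz)
    have hrs' := hrs.trans ball_subset_closedBall
    have := invariance_ball h z r hr (hhc.mono hrs') (hhi.mono hrs')
    refine interior_mono ?_ this
    rintro _ ⟨y, hy, rfl⟩
    exact hhP y (hrs' hy)
  have hout : ∀ x ∈ interior P, φ x ∈ ball (0 : ℂ) 1 := by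
    intro x hx
    obtain ⟨r, hr, hrs⟩ := Metric.nhds_basis_closedBall.mem_iff.1 (isOpen_interior.mem_nhds hx)
    have hrs' := hrs.trans interior_subset
    have := invariance_ball φ x r hr (hφc.mono hrs') (hφi.mono hrs')
    rw [← interior_closedBall (0 : ℂ) one_ne_zero]
    refine interior_mono ?_ this
    rintro _ ⟨y, hy, rfl⟩
    exact hφB y (hrs' hy)
  refine ⟨h, hhc, hhi, ?_, ?_, ⟨h 0, hin 0 (by simp)⟩⟩
  · rw [hPc.isClosed.frontier_eq]
    ext x
    constructor
    · rintro ⟨z, hz, rfl⟩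
      have hzb := sphere_subset_closedBall hz
      refine ⟨hhP z hzb, fun hzi => ?_⟩
      have := hout _ hzi
      rw [hφh z hzb] at this
      simp at this hz
      linarith
    · rintro ⟨hx, hxi⟩
      refine ⟨φ x, ?_, hhφ x hx⟩
      have h1 := hφB x hx
      by_contra hns
      apply hxi
      rw [← hhφ x hx]
      apply hin
      simp at h1 hns ⊢
      exact lt_of_le_of_ne h1 hns
  · intro x hx
    have h1 : φ x ∈ closure (ball (0 : ℂ) 1) := by
      rw [closure_ball _ one_ne_zero]
      exact hφB x hx
    have h2 : h (φ x) ∈ closure (h '' ball 0 1) := by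
      have := (hhc.mono (closure_ball (0 : ℂ) one_ne_zero).le).image_closure
      exact this ⟨_, h1, rfl⟩
    rw [hhφ x hx] at h2
    refine closure_mono ?_ h2
    rintro _ ⟨z, hz, rfl⟩
    exact hin z hz

/-! ### Part 2: lengths of arcs and paths -/

lemma edist_le_hausdorff (γ : ℝ → ℂ) (s t : ℝ) (hst : s ≤ t)
    (hc : ContinuousOn γ (Set.Icc s t)) :
    edist (γ s) (γ t) ≤ Measure.hausdorffMeasure 1 (γ '' Set.Icc s t) := by
  have hL : LipschitzWith 1 (fun z : ℂ => dist z (γ s)) := LipschitzWith.dist_left (γ s)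
  have h1 := hL.hausdorffMeasure_image_le (d := 1) zero_le_one (γ '' Set.Icc s t)
  rw [hausdorffMeasure_real] at h1
  have h2 : Set.Icc 0 (dist (γ t) (γ s)) ⊆
      (fun z : ℂ => dist z (γ s)) '' (γ '' Set.Icc s t) := by
    have hcc : ContinuousOn (fun u => dist (γ u) (γ s)) (Set.Icc s t) :=
      (continuous_id.dist continuous_const).comp_continuousOn hc
    have := intermediate_value_Icc hst hcc
    rw [dist_self] at this
    rw [Set.image_image]
    exact this
  calc edist (γ s) (γ t) = volume (Set.Icc 0 (dist (γ t) (γ s))) := by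
        rw [Real.volume_Icc, sub_zero, edist_dist, dist_comm]
    _ ≤ _ := measure_mono h2
    _ ≤ _ := h1
    _ = _ := by simp

lemma arc_var (γ : ℝ → ℂ) (a b : ℝ) (hc : ContinuousOn γ (Set.Icc a b))
    (hi : Set.InjOn γ (Set.Icc a b)) :
    eVariationOn γ (Set.Icc a b) ≤ Measure.hausdorffMeasure 1 (γ '' Set.Icc a b) := by
  refine iSup_le ?_
  rintro ⟨n, u, hu, hus⟩
  have hsub : ∀ i, Set.Icc (u i) (u (i + 1)) ⊆ Set.Icc a b := fun i =>
    Set.Icc_subset_Icc (hus i).1 (hus (i + 1)).2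
  have hsub' : ∀ i, Set.Ioc (u i) (u (i + 1)) ⊆ Set.Icc a b := fun i =>
    Set.Ioc_subset_Icc_self.trans (hsub i)
  have hterm : ∀ i, edist (γ (u (i + 1))) (γ (u i)) ≤
      Measure.hausdorffMeasure 1 (γ '' Set.Ioc (u i) (u (i + 1))) := by
    intro i
    have h1 := edist_le_hausdorff γ (u i) (u (i + 1)) (hu (Nat.le_succ i)) (hc.mono (hsub i))
    rw [edist_comm]
    refine h1.trans ?_
    rw [← Set.Ioc_insert_left (hu (Nat.le_succ i)), Set.image_insert_eq]
    refine (measure_mono (Set.insert_eq _ _).le).trans ((measure_union_le _ _).trans ?_)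
    have := Measure.nullSingletonClass_hausdorff ℂ one_pos
    simp
  calc _ ≤ ∑ i ∈ Finset.range n, Measure.hausdorffMeasure 1 (γ '' Set.Ioc (u i) (u (i + 1))) :=
        Finset.sum_le_sum fun i _ => hterm i
    _ = Measure.hausdorffMeasure 1
          (⋃ i ∈ Finset.range n, γ '' Set.Ioc (u i) (u (i + 1))) := by
        refine (measure_biUnion_finset ?_ ?_).symm
        · intro i _ j _ hij
          refine Set.disjoint_image_image ?_
          intro x hx y hy hxy
          have hxy' := hi (hsub' i hx) (hsub' j hy) hxy
          subst hxy'
          rcases lt_or_gt_of_ne hij with h | h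
          · have := hu (Nat.succ_le_of_lt h)
            exact absurd (hx.2.trans this) (not_le.2 hy.1)
          · have := hu (Nat.succ_le_of_lt h)
            exact absurd (hy.2.trans this) (not_le.2 hx.1)
        · intro i _
          exact measurableSet_Ioc.image_of_continuousOn_injOn (hc.mono (hsub' i))
            (hi.mono (hsub' i))
    _ ≤ _ := by
        refine measure_mono (Set.iUnion₂_subset fun i _ => Set.image_mono (hsub' i))

/-- `x` and `y` are joined inside `G` by a path of length at most `L`. -/
def JoinedBy (G : Set ℂ) (x y : ℂ) (L : ℝ≥0∞) : Prop :=
  ∃ γ : ℝ → ℂ, ContinuousOn γ (Set.Icc 0 1) ∧ γ 0 = x ∧ γ 1 = y ∧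
    γ '' Set.Icc 0 1 ⊆ G ∧ eVariationOn γ (Set.Icc 0 1) ≤ L

lemma JoinedBy.of_Icc {G : Set ℂ} {L : ℝ≥0∞} (γ : ℝ → ℂ) (a b : ℝ) (hab : a ≤ b)
    (hc : ContinuousOn γ (Set.Icc a b)) (hG : γ '' Set.Icc a b ⊆ G)
    (hL : eVariationOn γ (Set.Icc a b) ≤ L) : JoinedBy G (γ a) (γ b) L := by
  have hmaps : Set.MapsTo (fun t : ℝ => a + t * (b - a)) (Set.Icc 0 1) (Set.Icc a b) := by
    intro t ht
    constructor <;> nlinarith [ht.1, ht.2]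
  refine ⟨fun t => γ (a + t * (b - a)), hc.comp (by fun_prop) hmaps, by simp, by simp, ?_, ?_⟩
  · rintro _ ⟨t, ht, rfl⟩
    exact hG ⟨_, hmaps ht, rfl⟩
  · refine le_trans ?_ hL
    refine eVariationOn.comp_le_of_monotoneOn γ (fun t : ℝ => a + t * (b - a)) ?_ hmaps
    intro s _ t _ hst
    simp only
    nlinarith

lemma JoinedBy.symm {G : Set ℂ} {x y : ℂ} {L : ℝ≥0∞} (h : JoinedBy G x y L) :
    JoinedBy G y x L := by
  obtain ⟨γ, hc, h0, h1, hG, hL⟩ := h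
  have hmaps : Set.MapsTo (fun t : ℝ => 1 - t) (Set.Icc 0 1) (Set.Icc 0 1) := by
    intro t ht
    constructor <;> linarith [ht.1, ht.2]
  refine ⟨fun t => γ (1 - t), hc.comp (by fun_prop) hmaps, by simp [h1], by simp [h0], ?_, ?_⟩
  · rintro _ ⟨t, ht, rfl⟩
    exact hG ⟨_, hmaps ht, rfl⟩
  · refine le_trans ?_ hL
    refine eVariationOn.comp_le_of_antitoneOn γ (fun t : ℝ => 1 - t) ?_ hmaps
    intro s _ t _ hst
    simp only
    linarith

lemma JoinedBy.trans {G : Set ℂ} {x y z : ℂ} {L M : ℝ≥0∞} (h : JoinedBy G x y L)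
    (h' : JoinedBy G y z M) : JoinedBy G x z (L + M) := by
  obtain ⟨γ, hc, h0, h1, hG, hL⟩ := h
  obtain ⟨δ, hc', h0', h1', hG', hL'⟩ := h'
  let η : ℝ → ℂ := fun t => if t ≤ 1 then γ t else δ (t - 1)
  have e1 : Set.EqOn η γ (Set.Icc 0 1) := fun t ht => if_pos ht.2
  have hmaps : Set.MapsTo (fun t : ℝ => t - 1) (Set.Icc 1 2) (Set.Icc 0 1) := by
    intro t ht
    constructor <;> linarith [ht.1, ht.2]
  have e2 : Set.EqOn η (fun t => δ (t - 1)) (Set.Icc 1 2) := by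
    intro t ht
    rcases ht.1.eq_or_lt with h | h
    · subst h
      simp [η, h1, h0']
    · exact if_neg (not_le.2 h)
  have hun : Set.Icc (0 : ℝ) 1 ∪ Set.Icc 1 2 = Set.Icc 0 2 :=
    Set.Icc_union_Icc_eq_Icc (by norm_num) (by norm_num)
  have hη0 : η 0 = x := by simp [η, h0]
  have hη2 : η 2 = z := by
    have := e2 (show (2 : ℝ) ∈ Set.Icc 1 2 by norm_num)
    rw [this]
    norm_num [h1']
  rw [← hη0, ← hη2]
  refine JoinedBy.of_Icc η 0 2 (by norm_num) ?_ ?_ ?_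
  · rw [← hun]
    refine ContinuousOn.union_of_isClosed ?_ ?_ isClosed_Icc isClosed_Icc
    · exact hc.congr e1
    · exact (hc'.comp (by fun_prop) hmaps).congr e2
  · rw [← hun, Set.image_union]
    refine Set.union_subset ?_ ?_
    · rw [e1.image_eq]; exact hG
    · rw [e2.image_eq]
      rintro _ ⟨t, ht, rfl⟩
      exact hG' ⟨_, hmaps ht, rfl⟩
  · have := eVariationOn.Icc_add_Icc η (s := Set.univ) (a := 0) (b := 1) (c := 2)
      (by norm_num) (by norm_num) trivial
    simp only [Set.univ_inter] at this
    rw [← this]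
    refine add_le_add ?_ ?_
    · rw [eVariationOn.eq_of_eqOn e1]; exact hL
    · rw [eVariationOn.eq_of_eqOn e2]
      refine le_trans ?_ hL'
      refine eVariationOn.comp_le_of_monotoneOn δ (fun t : ℝ => t - 1) ?_ hmaps
      intro s _ t _ hst
      simp only
      linarith

lemma JoinedBy.mono {G G' : Set ℂ} {x y : ℂ} {L L' : ℝ≥0∞} (h : JoinedBy G x y L)
    (hG : G ⊆ G') (hL : L ≤ L') : JoinedBy G' x y L' := by
  obtain ⟨γ, hc, h0, h1, hG1, hL1⟩ := h
  exact ⟨γ, hc, h0, h1, hG1.trans hG, hL1.trans hL⟩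

lemma JoinedBy.refl {G : Set ℂ} {x : ℂ} (hx : x ∈ G) : JoinedBy G x x 0 := by
  refine ⟨fun _ => x, continuousOn_const, rfl, rfl, ?_, ?_⟩
  · rintro _ ⟨t, ht, rfl⟩
    exact hx
  · rw [eVariationOn.constant_on]
    rintro _ ⟨s, -, rfl⟩ _ ⟨t, -, rfl⟩
    rfl

lemma JoinedBy.segment {G : Set ℂ} {x y : ℂ} (hG : segment ℝ x y ⊆ G) :
    JoinedBy G x y (edist x y) := by
  rcases eq_or_ne x y with rfl | hne
  · rw [edist_self]
    exact JoinedBy.refl (hG (left_mem_segment ℝ _ _))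
  · have himg : (AffineMap.lineMap x y : ℝ → ℂ) '' Set.Icc 0 1 = _root_.segment ℝ x y :=
      (segment_eq_image_lineMap ℝ x y).symm
    refine ⟨AffineMap.lineMap x y, ?_, by simp, by simp, by rwa [himg], ?_⟩
    · exact AffineMap.lineMap_continuous.continuousOn
    · rw [← hausdorffMeasure_segment, ← himg]
      exact arc_var _ _ _ AffineMap.lineMap_continuous.continuousOn
        (AffineMap.lineMap_injective ℝ hne).injOn

/-- Two points on a Jordan curve: distance and arc length are at most half of the length. -/
lemma jordan_half (h : ℂ → ℂ) (hc : ContinuousOn h (closedBall 0 1))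
    (hi : Set.InjOn h (closedBall 0 1)) (F : Set ℂ) (hF : h '' sphere 0 1 = F)
    (x y : ℂ) (hx : x ∈ F) (hy : y ∈ F) :
    2 * edist x y ≤ Measure.hausdorffMeasure 1 F ∧
    JoinedBy F x y (Measure.hausdorffMeasure 1 F / 2) := by
  rcases eq_or_ne x y with rfl | hne
  · exact ⟨by simp, (JoinedBy.refl hx).mono subset_rfl (by simp)⟩
  let c : ℝ → ℂ := fun θ => h (Complex.exp (θ * Complex.I))
  have hs : ∀ θ : ℝ, Complex.exp (θ * Complex.I) ∈ sphere (0 : ℂ) 1 := by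
    intro θ
    simp [Complex.norm_exp_ofReal_mul_I]
  have hs' : ∀ θ : ℝ, Complex.exp (θ * Complex.I) ∈ closedBall (0 : ℂ) 1 := fun θ =>
    sphere_subset_closedBall (hs θ)
  have hcc : Continuous c := hc.comp_continuous (by fun_prop) hs'
  have hcF : ∀ θ, c θ ∈ F := fun θ => hF ▸ ⟨_, hs θ, rfl⟩
  have hper : ∀ θ, c (θ + 2 * Real.pi) = c θ := by
    intro θ
    simp only [c]
    congr 1
    push_cast
    rw [add_mul, Complex.exp_add, Complex.exp_two_pi_mul_I, mul_one]
  have hinj : ∀ s t, s < t → t < s + 2 * Real.pi → c s ≠ c t := by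
    intro s t hst ht heq
    have h1 := hi (hs' s) (hs' t) heq
    rw [Complex.exp_eq_exp_iff_exists_int] at h1
    obtain ⟨n, hn⟩ := h1
    have h2 := congrArg Complex.im hn
    simp at h2
    have hpi := Real.pi_pos
    have h3 : (n : ℝ) < 0 := by nlinarith
    have h4 : (-1 : ℝ) < n := by nlinarith
    have h5 : n < 0 := by exact_mod_cast h3
    have h6 : -1 < n := by exact_mod_cast h4
    omega
  have hsurj : ∀ z ∈ F, ∀ a : ℝ, ∃ θ, a ≤ θ ∧ θ < a + 2 * Real.pi ∧ c θ = z := by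
    intro z hz a
    rw [← hF] at hz
    obtain ⟨w, hw, rfl⟩ := hz
    have hw1 : ‖w‖ = 1 := by simpa using hw
    refine ⟨toIcoMod Real.two_pi_pos a (Complex.arg w), ?_, ?_, ?_⟩
    · exact left_le_toIcoMod _ _ _
    · exact toIcoMod_lt_right _ _ _
    · have : Function.Periodic c (2 * Real.pi) := hper
      rw [toIcoMod, this.sub_zsmul_eq]
      simp only [c]
      have := Complex.norm_mul_exp_arg_mul_I w
      rw [hw1] at this
      simp at this
      rw [this]
  obtain ⟨a, -, -, rfl⟩ := hsurj x hx 0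
  obtain ⟨b, hab, hba, rfl⟩ := hsurj y hy a
  have hab' : a < b := lt_of_le_of_ne hab (by rintro rfl; exact hne rfl)
  set a' := a + 2 * Real.pi with ha'
  have hi1 : Set.InjOn c (Set.Icc a b) := by
    intro s hs t ht heq
    by_contra hst
    rcases lt_or_gt_of_ne hst with h | h
    · exact hinj s t h (by linarith [hs.1, ht.2]) heq
    · exact hinj t s h (by linarith [ht.1, hs.2]) heq.symm
  have hi2 : Set.InjOn c (Set.Icc b a') := by
    intro s hs t ht heq
    by_contra hst
    rcases lt_or_gt_of_ne hst with h | h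
    · exact hinj s t h (by linarith [hs.1, ht.2]) heq
    · exact hinj t s h (by linarith [ht.1, hs.2]) heq.symm
  have hsum : Measure.hausdorffMeasure 1 (c '' Set.Icc a b) +
      Measure.hausdorffMeasure 1 (c '' Set.Icc b a') ≤ Measure.hausdorffMeasure 1 F := by
    have := Measure.nullSingletonClass_hausdorff ℂ one_pos
    rw [← measure_union₀]
    · refine measure_mono (Set.union_subset ?_ ?_) <;>
      · rintro _ ⟨t, -, rfl⟩
        exact hcF t
    · exact (isCompact_Icc.image hcc).measurableSet.nullMeasurableSet
    · have : c '' Set.Icc a b ∩ c '' Set.Icc b a' ⊆ {c a, c b} := by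
        rintro _ ⟨⟨s, hs, rfl⟩, ⟨t, ht, hst⟩⟩
        simp only [Set.mem_insert_iff, Set.mem_singleton_iff]
        rcases hs.1.eq_or_lt with h1 | h1
        · left; rw [h1]
        rcases hs.2.eq_or_lt with h2 | h2
        · right; rw [h2]
        exact absurd hst.symm (hinj s t (by linarith [ht.1]) (by linarith [ht.2]))
      refine measure_mono_null this ?_
      exact (Set.toFinite _).measure_zero _
  have hd1 := edist_le_hausdorff c a b hab hcc.continuousOn
  have hd2 := edist_le_hausdorff c b a' hba.le hcc.continuousOn
  rw [hper a, edist_comm] at hd2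
  refine ⟨?_, ?_⟩
  · rw [two_mul]
    exact (add_le_add hd1 hd2).trans hsum
  · have hj1 := JoinedBy.of_Icc (G := F) c a b hab hcc.continuousOn
      (by rintro _ ⟨t, -, rfl⟩; exact hcF t) (arc_var c a b hcc.continuousOn hi1)
    have hj2 := JoinedBy.of_Icc (G := F) c b a' hba.le hcc.continuousOn
      (by rintro _ ⟨t, -, rfl⟩; exact hcF t) (arc_var c b a' hcc.continuousOn hi2)
    rw [hper a] at hj2
    rcases le_total (Measure.hausdorffMeasure 1 (c '' Set.Icc a b))
      (Measure.hausdorffMeasure 1 (c '' Set.Icc b a')) with hle | hle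
    · refine hj1.mono subset_rfl ?_
      rw [ENNReal.le_div_iff_mul_le (by simp) (by simp), mul_two]
      exact (add_le_add_right hle _).trans hsum
    · refine hj2.symm.mono subset_rfl ?_
      rw [ENNReal.le_div_iff_mul_le (by simp) (by simp), mul_two]
      exact (add_le_add_left hle _).trans hsum

/-! ### Part 3: convex polygonal cells -/

/-- The affine functional with given coefficients. -/
def aff (p : ℝ × ℝ × ℝ) (z : ℂ) : ℝ := p.1 * z.re + p.2.1 * z.im + p.2.2

lemma aff_continuous (p : ℝ × ℝ × ℝ) : Continuous (aff p) := by
  unfold aff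
  fun_prop

lemma aff_line (p : ℝ × ℝ × ℝ) (x y : ℂ) (t : ℝ) :
    aff p (x + t * (y - x)) = aff p x + t * (aff p y - aff p x) := by
  simp [aff]
  ring

lemma aff_comb (p : ℝ × ℝ × ℝ) (x y : ℂ) (s t : ℝ) (hst : s + t = 1) :
    aff p (s • x + t • y) = s * aff p x + t * aff p y := by
  have : s = 1 - t := by linarith
  subst this
  simp [aff]
  ring

/-- Open cell. -/
def ocell {J : Type} (p : J → ℝ × ℝ × ℝ) : Set ℂ := {z | ∀ j, 0 < aff (p j) z}

/-- Closed cell. -/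
def ccell {J : Type} (p : J → ℝ × ℝ × ℝ) : Set ℂ := {z | ∀ j, 0 ≤ aff (p j) z}

/-- Face of a closed cell. -/
def face {J : Type} (p : J → ℝ × ℝ × ℝ) (j : J) : Set ℂ := ccell p ∩ {z | aff (p j) z = 0}

lemma ocell_subset {J : Type} (p : J → ℝ × ℝ × ℝ) : ocell p ⊆ ccell p :=
  fun _ hz j => (hz j).le

lemma ocell_isOpen {J : Type} [Fintype J] (p : J → ℝ × ℝ × ℝ) : IsOpen (ocell p) := by
  have : ocell p = ⋂ j, {z | 0 < aff (p j) z} := by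
    ext z; simp [ocell]
  rw [this]
  exact isOpen_iInter_of_finite fun j => isOpen_lt continuous_const (aff_continuous _)

lemma ccell_isClosed {J : Type} (p : J → ℝ × ℝ × ℝ) : IsClosed (ccell p) := by
  have : ccell p = ⋂ j, {z | 0 ≤ aff (p j) z} := by
    ext z; simp [ccell]
  rw [this]
  exact isClosed_iInter fun j => isClosed_le continuous_const (aff_continuous _)

lemma ocell_convex {J : Type} (p : J → ℝ × ℝ × ℝ) : Convex ℝ (ocell p) := by
  intro x hx y hy s t hs ht hst j
  rw [aff_comb _ _ _ _ _ hst]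
  have h1 := hx j
  have h2 := hy j
  rcases hs.eq_or_lt with h | h
  · subst h
    have : t = 1 := by linarith
    subst this
    simpa using h2
  · have := mul_pos h h1
    have := mul_nonneg ht h2.le
    linarith

lemma ccell_convex {J : Type} (p : J → ℝ × ℝ × ℝ) : Convex ℝ (ccell p) := by
  intro x hx y hy s t hs ht hst j
  rw [aff_comb _ _ _ _ _ hst]
  have := mul_nonneg hs (hx j)
  have := mul_nonneg ht (hy j)
  linarith

lemma interior_ccell {J : Type} [Fintype J] (p : J → ℝ × ℝ × ℝ) (hO : (ocell p).Nonempty) :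
    interior (ccell p) = ocell p := by
  apply subset_antisymm
  · intro x hx j
    obtain ⟨o, ho⟩ := hO
    have hxC := interior_subset hx
    refine lt_of_le_of_ne (hxC j) fun h0 => ?_
    have hcont : Continuous fun t : ℝ => x + t * (o - x) := by fun_prop
    have hnh : (fun t : ℝ => x + t * (o - x)) ⁻¹' ccell p ∈ nhds (0 : ℝ) := by
      apply hcont.continuousAt.preimage_mem_nhds
      simpa using mem_interior_iff_mem_nhds.1 hx
    obtain ⟨r, hr, hrs⟩ := Metric.mem_nhds_iff.1 hnh
    have hmem : (-(r / 2)) ∈ ball (0 : ℝ) r := by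
      rw [mem_ball_zero_iff, norm_neg, Real.norm_of_nonneg (by positivity)]
      linarith
    have h1 : 0 ≤ aff (p j) (x + ((-(r / 2) : ℝ) : ℂ) * (o - x)) := hrs hmem j
    rw [aff_line, ← h0] at h1
    have h2 := ho j
    nlinarith
  · exact interior_maximal (ocell_subset p) (ocell_isOpen p)

lemma ccell_subset_closure {J : Type} (p : J → ℝ × ℝ × ℝ) (hO : (ocell p).Nonempty) :
    ccell p ⊆ closure (ocell p) := by
  intro x hx
  obtain ⟨o, ho⟩ := hO
  have hcont : Continuous fun t : ℝ => x + t * (o - x) := by fun_prop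
  have h1 : (0 : ℝ) ∈ closure (Set.Ioo (0 : ℝ) 1) := by
    rw [closure_Ioo (by norm_num)]
    norm_num
  have h2 := image_closure_subset_closure_image hcont ⟨0, h1, rfl⟩
  simp only [Complex.ofReal_zero, zero_mul, add_zero] at h2
  refine closure_mono ?_ h2
  rintro _ ⟨t, ht, rfl⟩ j
  rw [aff_line]
  have := hx j
  have := ho j
  have h3 := ht.1
  have h4 := ht.2
  have : aff (p j) x + t * (aff (p j) o - aff (p j) x) =
    (1 - t) * aff (p j) x + t * aff (p j) o := by ring
  rw [this]
  have := mul_pos h3 (ho j)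
  have := mul_nonneg (sub_nonneg.2 h4.le) (hx j)
  linarith

lemma frontier_ccell {J : Type} [Fintype J] (p : J → ℝ × ℝ × ℝ) (hO : (ocell p).Nonempty) :
    frontier (ccell p) = ⋃ j, face p j := by
  rw [(ccell_isClosed p).frontier_eq, interior_ccell p hO]
  ext x
  simp only [Set.mem_sdiff, ocell, Set.mem_ofPred_eq, not_forall, not_lt, Set.mem_iUnion, face,
    Set.mem_inter_iff]
  constructor
  · rintro ⟨hx, j, hj⟩
    exact ⟨j, hx, le_antisymm hj (hx j)⟩
  · rintro ⟨j, hx, hj⟩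
    exact ⟨hx, j, hj.le⟩

/-- A compact convex nonempty subset of a line is a segment. -/
lemma line_segment (q : ℝ × ℝ × ℝ) (hq : q.1 ≠ 0 ∨ q.2.1 ≠ 0) (S : Set ℂ)
    (hS : IsCompact S) (hconv : Convex ℝ S) (hne : S.Nonempty) (hl : ∀ z ∈ S, aff q z = 0) :
    ∃ e : ℂ × ℂ, S = segment ℝ e.1 e.2 := by
  let t : ℂ → ℝ := fun z => -q.2.1 * z.re + q.1 * z.im
  have ht : Continuous t := by fun_prop
  have hpos : 0 < q.1 ^ 2 + q.2.1 ^ 2 := by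
    rcases hq with h | h
    · have := sq_nonneg q.2.1
      have := sq_pos_of_ne_zero h
      linarith
    · have := sq_nonneg q.1
      have := sq_pos_of_ne_zero h
      linarith
  have hinj : ∀ z w, aff q z = 0 → aff q w = 0 → t z = t w → z = w := by
    intro z w hz hw hzw
    simp only [aff, t] at hz hw hzw
    have h1 : q.1 * (z.re - w.re) + q.2.1 * (z.im - w.im) = 0 := by linarith
    have h2 : -q.2.1 * (z.re - w.re) + q.1 * (z.im - w.im) = 0 := by linarith
    apply Complex.ext
    · have : (q.1 ^ 2 + q.2.1 ^ 2) * (z.re - w.re) = 0 := by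
        linear_combination q.1 * h1 - q.2.1 * h2
      rcases mul_eq_zero.1 this with h | h
      · exact absurd h hpos.ne'
      · linarith
    · have : (q.1 ^ 2 + q.2.1 ^ 2) * (z.im - w.im) = 0 := by
        linear_combination q.2.1 * h1 + q.1 * h2
      rcases mul_eq_zero.1 this with h | h
      · exact absurd h hpos.ne'
      · linarith
  obtain ⟨a, ha, hamin⟩ := hS.exists_isMinOn hne ht.continuousOn
  obtain ⟨b, hb, hbmax⟩ := hS.exists_isMaxOn hne ht.continuousOn
  refine ⟨(a, b), subset_antisymm ?_ (hconv.segment_subset ha hb)⟩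
  intro z hz
  have h1 : t a ≤ t z := hamin hz
  have h2 : t z ≤ t b := hbmax hz
  rw [segment_eq_image']
  rcases (h1.trans h2).eq_or_lt with heq | hlt
  · refine ⟨0, by norm_num, ?_⟩
    have := hinj a z (hl a ha) (hl z hz) (by linarith)
    simp [this]
  · have hd : 0 < t b - t a := by linarith
    refine ⟨(t z - t a) / (t b - t a), ⟨by apply div_nonneg <;> linarith,
      by rw [div_le_one hd]; linarith⟩, ?_⟩
    apply hinj _ _ _ (hl z hz)
    · have key : ∀ s : ℝ, t (a + s * (b - a)) = t a + s * (t b - t a) := by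
        intro s
        simp [t]
        ring
      simp only [Complex.real_smul]
      rw [key, div_mul_cancel₀ _ hd.ne']
      ring
    · simp only [Complex.real_smul]
      rw [aff_line, hl a ha, hl b hb]
      simp

lemma face_segment {J : Type} (p : J → ℝ × ℝ × ℝ) (hO : (ocell p).Nonempty)
    (hC : IsCompact (ccell p)) (j : J) (hne : (face p j).Nonempty) :
    ∃ e : ℂ × ℂ, face p j = segment ℝ e.1 e.2 := by
  have hcl : IsClosed {z | aff (p j) z = 0} := isClosed_eq (aff_continuous _) continuous_const
  refine line_segment (p j) ?_ _ (hC.inter_right hcl) ?_ hne fun z hz => hz.2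
  · by_contra! h
    obtain ⟨o, ho⟩ := hO
    obtain ⟨z, hz⟩ := hne
    have h1 := ho j
    have h2 : aff (p j) z = 0 := hz.2
    simp only [aff, h.1, h.2] at h1 h2
    linarith
  · refine (ccell_convex p).inter ?_
    intro x hx y hy s t hs ht hst
    have hx' : aff (p j) x = 0 := hx
    have hy' : aff (p j) y = 0 := hy
    change aff (p j) _ = 0
    rw [aff_comb _ _ _ _ _ hst, hx', hy']
    simp

lemma face_measure {J : Type} (p : J → ℝ × ℝ × ℝ) (hO : (ocell p).Nonempty)
    (hC : IsCompact (ccell p)) (j : J) (d : ℝ≥0∞)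
    (hd : ∀ x ∈ face p j, ∀ y ∈ face p j, edist x y ≤ d) :
    Measure.hausdorffMeasure 1 (face p j) ≤ d := by
  rcases (face p j).eq_empty_or_nonempty with h | h
  · simp [h]
  · obtain ⟨e, he⟩ := face_segment p hO hC j h
    have h1 := hd e.1 (he ▸ left_mem_segment ℝ _ _) e.2 (he ▸ right_mem_segment ℝ _ _)
    rwa [he, hausdorffMeasure_segment]

lemma face_subset_of_meet {J : Type} (p : J → ℝ × ℝ × ℝ) (i j : J) (a b a' b' z : ℂ)
    (hi : face p i = segment ℝ a b) (hj : face p j = segment ℝ a' b')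
    (hz : z ∈ openSegment ℝ a b) (hz' : z ∈ openSegment ℝ a' b') :
    face p i ⊆ face p j := by
  have hzj : aff (p j) z = 0 := by
    have : z ∈ face p j := hj ▸ openSegment_subset_segment ℝ _ _ hz'
    exact this.2
  have ha : a ∈ face p i := hi ▸ left_mem_segment ℝ _ _
  have hb : b ∈ face p i := hi ▸ right_mem_segment ℝ _ _
  have ha0 := ha.1 j
  have hb0 := hb.1 j
  obtain ⟨s, t, hs, ht, hst, rfl⟩ := hz
  rw [aff_comb _ _ _ _ _ hst] at hzj
  have h1 := mul_nonneg hs.le ha0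
  have h2 := mul_nonneg ht.le hb0
  have ha1 : aff (p j) a = 0 := by
    rcases mul_eq_zero.1 (show s * aff (p j) a = 0 by linarith) with h | h
    · exact absurd h hs.ne'
    · exact h
  have hb1 : aff (p j) b = 0 := by
    rcases mul_eq_zero.1 (show t * aff (p j) b = 0 by linarith) with h | h
    · exact absurd h ht.ne'
    · exact h
  intro w hw
  refine ⟨hw.1, ?_⟩
  rw [hi] at hw
  obtain ⟨s', t', -, -, hst', rfl⟩ := hw
  change aff (p j) _ = 0
  rw [aff_comb _ _ _ _ _ hst', ha1, hb1]
  simp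

lemma ccell_polygonal {J : Type} [Fintype J] (p : J → ℝ × ℝ × ℝ) (hO : (ocell p).Nonempty)
    (hC : IsCompact (ccell p)) : IsPolygonalDisk (ccell p) := by
  classical
  have hintr : (interior (ccell p)).Nonempty := by rwa [interior_ccell p hO]
  obtain ⟨h, -, hcl, hfr⟩ := exists_homeomorph_image_interior_closure_frontier_eq_unitBall
    (ccell_convex p) hintr hC.isBounded
  rw [(ccell_isClosed p).closure_eq] at hcl
  refine ⟨hC, ⟨(h.image (ccell p)).trans (Homeomorph.setCongr hcl)⟩, ?_⟩
  have hacc : ∀ x ∈ frontier (ccell p), AccPt x (Filter.principal (frontier (ccell p))) := by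
    have hfr' : frontier (ccell p) = h.symm '' sphere 0 1 := by
      rw [← hfr, ← Set.image_comp]
      simp
    have hpre : IsPreconnected (frontier (ccell p)) := by
      rw [hfr']
      refine (isPreconnected_sphere ?_ 0 1).image _ h.symm.continuous.continuousOn
      rw [Complex.rank_real_complex]
      norm_num
    have hnt : (frontier (ccell p)).Nontrivial := by
      rw [hfr']
      refine Set.Nontrivial.image ?_ h.symm.injective
      exact ⟨1, by simp, -1, by simp, by norm_num⟩
    exact hpre.preperfect_of_nontrivial hnt
  have hep : ∀ S : Set ℂ, ∃ e : ℂ × ℂ, (∃ e' : ℂ × ℂ, S = segment ℝ e'.1 e'.2) →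
      S = segment ℝ e.1 e.2 := by
    intro S
    by_cases hS : ∃ e' : ℂ × ℂ, S = segment ℝ e'.1 e'.2
    · obtain ⟨e, he⟩ := hS
      exact ⟨e, fun _ => he⟩
    · exact ⟨(0, 0), fun h => absurd h hS⟩
  choose ep hep using hep
  let E : Finset (ℂ × ℂ) := ((Finset.univ.filter fun j => (face p j).Nonempty).image
    fun j => ep (face p j)).filter fun e => e.1 ≠ e.2
  have hE : ∀ e, e ∈ E ↔ (∃ j, (face p j).Nonempty ∧ ep (face p j) = e) ∧ e.1 ≠ e.2 := by
    intro e
    simp [E]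
  have hface : ∀ j, (face p j).Nonempty →
      face p j = segment ℝ (ep (face p j)).1 (ep (face p j)).2 := fun j hj =>
    hep _ (face_segment p hO hC j hj)
  refine ⟨E, fun e he => ((hE e).1 he).2, ?_, ?_⟩
  · apply subset_antisymm
    · intro x hx
      by_contra hxU
      set U := ⋃ e ∈ E, segment ℝ e.1 e.2 with hU
      have hUc : IsClosed U := by
        refine Set.Finite.isClosed_biUnion E.finite_toSet fun e _ => ?_
        have : segment ℝ e.1 e.2 = (AffineMap.lineMap e.1 e.2 : ℝ → ℂ) '' Set.Icc 0 1 :=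
          segment_eq_image_lineMap ℝ _ _
        rw [this]
        exact (isCompact_Icc.image AffineMap.lineMap_continuous).isClosed
      let V : Set ℂ := (Finset.univ.image fun j => (ep (face p j)).1 : Finset ℂ)
      have hV : V.Finite := Finset.finite_toSet _
      have hcov : frontier (ccell p) ⊆ U ∪ V := by
        rw [frontier_ccell p hO]
        refine Set.iUnion_subset fun j z hz => ?_
        have hj := hface j ⟨z, hz⟩
        by_cases hd : (ep (face p j)).1 = (ep (face p j)).2
        · right
          rw [hj, ← hd, segment_same] at hz
          simp only [V, Finset.coe_image, Finset.coe_univ, Set.image_univ, Set.mem_range]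
          exact ⟨j, hz.symm⟩
        · left
          rw [hU]
          simp only [Set.mem_iUnion]
          refine ⟨ep (face p j), (hE _).2 ⟨⟨j, ⟨z, hz⟩, rfl⟩, hd⟩, ?_⟩
          rw [← hj]
          exact hz
      have hW : (U ∪ (V \ {x}))ᶜ ∈ nhds x := by
        apply (hUc.union (hV.subset Set.sdiff_subset).isClosed).isOpen_compl.mem_nhds
        simp [hxU]
      obtain ⟨y, ⟨hy1, hy2⟩, hyx⟩ := accPt_iff_nhds.1 (hacc x hx) _ hW
      rcases hcov hy2 with h | h
      · exact hy1 (Or.inl h)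
      · exact hy1 (Or.inr ⟨h, hyx⟩)
    · refine Set.iUnion₂_subset fun e he => ?_
      obtain ⟨⟨j, hj, rfl⟩, -⟩ := (hE e).1 he
      rw [← hface j hj, frontier_ccell p hO]
      exact Set.subset_iUnion _ j
  · intro e he e' he' hne
    obtain ⟨⟨i, hi, rfl⟩, -⟩ := (hE e).1 he
    obtain ⟨⟨j, hj, rfl⟩, -⟩ := (hE e').1 he'
    rw [Set.eq_empty_iff_forall_notMem]
    rintro z ⟨hz, hz'⟩
    apply hne
    have h1 := face_subset_of_meet p i j _ _ _ _ z (hface i hi) (hface j hj) hz hz'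
    have h2 := face_subset_of_meet p j i _ _ _ _ z (hface j hj) (hface i hi) hz' hz
    rw [subset_antisymm h1 h2]

/-! ### Part 4: chords and connectivity of the skeleton -/

lemma exit_point (P : Set ℂ) (hP : IsCompact P) (x u : ℂ) (hx : x ∈ P) (hu : u ≠ 0) :
    ∃ t : ℝ, 0 ≤ t ∧ x + t * u ∈ frontier P ∧ ∀ s : ℝ, 0 ≤ s → s ≤ t → x + s * u ∈ P := by
  let A : Set ℝ := {t | 0 ≤ t ∧ x + t * u ∉ interior P}
  have hcont : Continuous fun t : ℝ => x + t * u := by fun_prop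
  have hAcl : IsClosed A := by
    refine (isClosed_le continuous_const continuous_id).inter ?_
    exact (isOpen_interior.preimage hcont).isClosed_compl
  have hAne : A.Nonempty := by
    obtain ⟨R, hR⟩ := hP.isBounded.subset_closedBall (0 : ℂ)
    have hu0 : 0 < ‖u‖ := norm_pos_iff.2 hu
    have hR0 : 0 ≤ R := by
      have := hR hx
      rw [mem_closedBall_zero_iff] at this
      exact (norm_nonneg _).trans this
    refine ⟨(R + ‖x‖ + 1) / ‖u‖, by positivity, fun hin => ?_⟩
    have h1 := hR (interior_subset hin)
    rw [mem_closedBall_zero_iff] at h1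
    have h2 : ‖(((R + ‖x‖ + 1) / ‖u‖ : ℝ) : ℂ) * u‖ = R + ‖x‖ + 1 := by
      rw [norm_mul, Complex.norm_real, Real.norm_of_nonneg (by positivity)]
      field_simp
    have h3 := norm_sub_le (x + (((R + ‖x‖ + 1) / ‖u‖ : ℝ) : ℂ) * u) x
    rw [add_sub_cancel_left, h2] at h3
    linarith
  have hAbdd : BddBelow A := ⟨0, fun t ht => ht.1⟩
  have hmem : sInf A ∈ A := hAcl.csInf_mem hAne hAbdd
  set t := sInf A with ht
  have hlt : ∀ s : ℝ, 0 ≤ s → s < t → x + s * u ∈ interior P := by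
    intro s hs hst
    by_contra hcon
    exact absurd (csInf_le hAbdd (show s ∈ A from ⟨hs, hcon⟩)) (not_le.2 hst)
  have htP : x + t * u ∈ P := by
    rcases hmem.1.eq_or_lt with h | h
    · rw [← h]
      simpa using hx
    · have h1 : t ∈ closure (Set.Ioo 0 t) := by
        rw [closure_Ioo h.ne]
        exact ⟨h.le, le_rfl⟩
      have h2 := image_closure_subset_closure_image hcont ⟨t, h1, rfl⟩
      have h3 : closure ((fun t : ℝ => x + t * u) '' Set.Ioo 0 t) ⊆ P := by
        refine hP.isClosed.closure_subset_iff.2 ?_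
        rintro _ ⟨s, hs, rfl⟩
        exact interior_subset (hlt s hs.1.le hs.2)
      exact h3 h2
  refine ⟨t, hmem.1, ?_, ?_⟩
  · rw [hP.isClosed.frontier_eq]
    exact ⟨htP, hmem.2⟩
  · intro s hs hst
    rcases hst.eq_or_lt with h | h
    · rw [h]; exact htP
    · exact interior_subset (hlt s hs h)

lemma seg_chord (x u : ℂ) (t : ℝ) (G : Set ℂ) (ht : 0 ≤ t)
    (h : ∀ s : ℝ, 0 ≤ s → s ≤ t → x + s * u ∈ G) : segment ℝ x (x + t * u) ⊆ G := by
  rw [segment_eq_image']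
  rintro _ ⟨θ, hθ, rfl⟩
  have := h (θ * t) (mul_nonneg hθ.1 ht) (mul_le_of_le_one_left ht hθ.2)
  simpa [mul_assoc] using this

lemma skeleton_connected (P : Set ℂ) (hP : IsCompact P)
    (hne : Nonempty (↥P ≃ₜ ↥(Metric.closedBall (0 : ℂ) 1))) (G : Set ℂ) (hGP : G ⊆ P)
    (hfG : frontier P ⊆ G)
    (hline : ∀ x ∈ G, ∃ u : ℂ, u ≠ 0 ∧ ∀ t : ℝ, x + t * u ∈ P → x + t * u ∈ G)
    (x y : ℂ) (hx : x ∈ G) (hy : y ∈ G) :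
    JoinedBy G x y (Measure.hausdorffMeasure 1 (frontier P)) := by
  obtain ⟨h, hc, hi, hF, -, -⟩ := disk_structure P hne hP
  set ℓ := Measure.hausdorffMeasure 1 (frontier P) with hℓ
  have key : ∀ x ∈ G, ∃ a ∈ frontier P, JoinedBy G x a (ℓ / 2 / 2) := by
    intro x hx
    obtain ⟨u, hu, hline⟩ := hline x hx
    obtain ⟨t, ht0, htf, ht⟩ := exit_point P hP x u (hGP hx) hu
    obtain ⟨s, hs0, hsf, hs⟩ := exit_point P hP x (-u) (hGP hx) (neg_ne_zero.2 hu)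
    have hj1 : JoinedBy G x (x + t * u) (edist x (x + t * u)) :=
      JoinedBy.segment (seg_chord x u t G ht0 fun r hr0 hr => hline r (ht r hr0 hr))
    have hj2 : JoinedBy G x (x + s * (-u)) (edist x (x + s * (-u))) := by
      refine JoinedBy.segment (seg_chord x (-u) s G hs0 fun r hr0 hr => ?_)
      have h1 := hs r hr0 hr
      have h2 : x + r * (-u) = x + ((-r : ℝ) : ℂ) * u := by push_cast; ring
      rw [h2] at h1 ⊢
      exact hline _ h1
    have hd := (jordan_half h hc hi _ hF _ _ htf hsf).1
    have e1 : edist x (x + t * u) = ENNReal.ofReal (t * ‖u‖) := by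
      rw [edist_dist, dist_eq_norm]
      congr 1
      rw [sub_add_cancel_left, norm_neg, norm_mul, Complex.norm_real, Real.norm_of_nonneg ht0]
    have e2 : edist x (x + s * (-u)) = ENNReal.ofReal (s * ‖u‖) := by
      rw [edist_dist, dist_eq_norm]
      congr 1
      rw [sub_add_cancel_left, norm_neg, norm_mul, norm_neg, Complex.norm_real,
        Real.norm_of_nonneg hs0]
    have e3 : edist (x + t * u) (x + s * (-u)) =
        ENNReal.ofReal (t * ‖u‖) + ENNReal.ofReal (s * ‖u‖) := by
      rw [← ENNReal.ofReal_add (by positivity) (by positivity), edist_dist, dist_eq_norm]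
      congr 1
      have : x + t * u - (x + s * (-u)) = ((t + s : ℝ) : ℂ) * u := by push_cast; ring
      rw [this, norm_mul, Complex.norm_real, Real.norm_of_nonneg (by positivity)]
      ring
    rw [e3] at hd
    rcases le_total (ENNReal.ofReal (t * ‖u‖)) (ENNReal.ofReal (s * ‖u‖)) with hle | hle
    · refine ⟨_, htf, hj1.mono subset_rfl ?_⟩
      rw [e1, ENNReal.le_div_iff_mul_le (by simp) (by simp),
        ENNReal.le_div_iff_mul_le (by simp) (by simp)]
      refine le_trans ?_ hd
      rw [mul_comm, mul_two]
      gcongr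
    · refine ⟨_, hsf, hj2.mono subset_rfl ?_⟩
      rw [e2, ENNReal.le_div_iff_mul_le (by simp) (by simp),
        ENNReal.le_div_iff_mul_le (by simp) (by simp)]
      refine le_trans ?_ hd
      rw [mul_comm, mul_two]
      gcongr
  obtain ⟨a, ha, hxa⟩ := key x hx
  obtain ⟨b, hb, hyb⟩ := key y hy
  have hab := (jordan_half h hc hi _ hF a b ha hb).2.mono hfG le_rfl
  refine ((hxa.trans hab).trans hyb.symm).mono subset_rfl ?_
  rw [add_right_comm, ENNReal.add_halves, ENNReal.add_halves]

/-! ### Part 5: the arrangement -/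

lemma line_null (q : ℝ × ℝ × ℝ) (hq : q.1 ≠ 0 ∨ q.2.1 ≠ 0) :
    volume {z : ℂ | aff q z = 0} = 0 := by
  rcases Set.eq_empty_or_nonempty {z : ℂ | aff q z = 0} with h | ⟨x, hx⟩
  · simp [h]
  · let L : ℂ →ₗ[ℝ] ℝ := q.1 • Complex.reLm + q.2.1 • Complex.imLm
    have hL : ∀ z, L z = q.1 * z.re + q.2.1 * z.im := fun z => by simp [L]
    have hxx : aff q x = 0 := hx
    have hset : {z : ℂ | aff q z = 0} ⊆ AffineSubspace.mk' x (LinearMap.ker L) := by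
      intro z hz
      have hz' : aff q z = 0 := hz
      simp only [SetLike.mem_coe, AffineSubspace.mem_mk', LinearMap.mem_ker, vsub_eq_sub,
        hL, Complex.sub_re, Complex.sub_im]
      simp only [aff] at hz' hxx
      linarith
    refine measure_mono_null hset (Measure.addHaar_affineSubspace _ _ ?_)
    intro htop
    have h1 : LinearMap.ker L = ⊤ := by
      rw [← AffineSubspace.direction_mk' x (LinearMap.ker L), htop, AffineSubspace.direction_top]
    rw [LinearMap.ker_eq_top] at h1
    have h2 := hL 1
    have h3 := hL Complex.I
    rw [h1] at h2 h3
    simp at h2 h3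
    rcases hq with h | h
    · exact h h2.symm
    · exact h h3.symm

/-- Sign of a Boolean. -/
def sg (b : Bool) : ℝ := if b then 1 else -1

/-- Coefficients of a cell of the arrangement. -/
def cellp {I : Type} (q : I → ℝ × ℝ × ℝ) (δ : ℝ) (c : (ℤ × ℤ) × (I → Bool)) :
    Fin 4 ⊕ I → ℝ × ℝ × ℝ
  | .inl 0 => (1, 0, -(c.1.1 * δ))
  | .inl 1 => (-1, 0, (c.1.1 + 1) * δ)
  | .inl 2 => (0, 1, -(c.1.2 * δ))
  | .inl 3 => (0, -1, (c.1.2 + 1) * δ)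
  | .inr i => (sg (c.2 i) * (q i).1, sg (c.2 i) * (q i).2.1, sg (c.2 i) * (q i).2.2)

/-- Open grid square. -/
def osq (δ : ℝ) (c : ℤ × ℤ) : Set ℂ :=
  {z | (c.1 * δ < z.re ∧ z.re < (c.1 + 1) * δ) ∧ c.2 * δ < z.im ∧ z.im < (c.2 + 1) * δ}

/-- Closed grid square. -/
def csq (δ : ℝ) (c : ℤ × ℤ) : Set ℂ :=
  {z | (c.1 * δ ≤ z.re ∧ z.re ≤ (c.1 + 1) * δ) ∧ c.2 * δ ≤ z.im ∧ z.im ≤ (c.2 + 1) * δ}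

lemma mem_ocell_cellp {I : Type} (q : I → ℝ × ℝ × ℝ) (δ : ℝ) (c : (ℤ × ℤ) × (I → Bool)) (z : ℂ) :
    z ∈ ocell (cellp q δ c) ↔ z ∈ osq δ c.1 ∧ ∀ i, 0 < sg (c.2 i) * aff (q i) z := by
  have h : ∀ i, aff (cellp q δ c (.inr i)) z = sg (c.2 i) * aff (q i) z := by
    intro i
    simp [aff, cellp]
    ring
  constructor
  · intro hz
    refine ⟨⟨⟨?_, ?_⟩, ?_, ?_⟩, fun i => h i ▸ hz (.inr i)⟩
    · have := hz (.inl 0); simp [aff, cellp] at this; linarith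
    · have := hz (.inl 1); simp [aff, cellp] at this; linarith
    · have := hz (.inl 2); simp [aff, cellp] at this; linarith
    · have := hz (.inl 3); simp [aff, cellp] at this; linarith
  · rintro ⟨⟨⟨h1, h2⟩, h3, h4⟩, h5⟩ j
    rcases j with j | i
    · fin_cases j <;> simp [aff, cellp] <;> linarith
    · rw [h]; exact h5 i

lemma mem_ccell_cellp {I : Type} (q : I → ℝ × ℝ × ℝ) (δ : ℝ) (c : (ℤ × ℤ) × (I → Bool)) (z : ℂ) :
    z ∈ ccell (cellp q δ c) ↔ z ∈ csq δ c.1 ∧ ∀ i, 0 ≤ sg (c.2 i) * aff (q i) z := by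
  have h : ∀ i, aff (cellp q δ c (.inr i)) z = sg (c.2 i) * aff (q i) z := by
    intro i
    simp [aff, cellp]
    ring
  constructor
  · intro hz
    refine ⟨⟨⟨?_, ?_⟩, ?_, ?_⟩, fun i => h i ▸ hz (.inr i)⟩
    · have := hz (.inl 0); simp [aff, cellp] at this; linarith
    · have := hz (.inl 1); simp [aff, cellp] at this; linarith
    · have := hz (.inl 2); simp [aff, cellp] at this; linarith
    · have := hz (.inl 3); simp [aff, cellp] at this; linarith
  · rintro ⟨⟨⟨h1, h2⟩, h3, h4⟩, h5⟩ j
    rcases j with j | i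
    · fin_cases j <;> simp [aff, cellp] <;> linarith
    · rw [h]; exact h5 i

lemma csq_dist (δ : ℝ) (c : ℤ × ℤ) (x y : ℂ) (hx : x ∈ csq δ c) (hy : y ∈ csq δ c) :
    |x.re - y.re| ≤ δ ∧ |x.im - y.im| ≤ δ ∧ dist x y ≤ 2 * δ := by
  obtain ⟨⟨a1, a2⟩, a3, a4⟩ := hx
  obtain ⟨⟨b1, b2⟩, b3, b4⟩ := hy
  have h1 : |x.re - y.re| ≤ δ := by rw [abs_le]; constructor <;> linarith
  have h2 : |x.im - y.im| ≤ δ := by rw [abs_le]; constructor <;> linarith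
  refine ⟨h1, h2, ?_⟩
  rw [dist_eq_norm]
  have := Complex.norm_le_abs_re_add_abs_im (x - y)
  simp only [Complex.sub_re, Complex.sub_im] at this
  linarith

lemma osq_subset (δ : ℝ) (c : ℤ × ℤ) : osq δ c ⊆ csq δ c :=
  fun _ ⟨⟨h1, h2⟩, h3, h4⟩ => ⟨⟨h1.le, h2.le⟩, h3.le, h4.le⟩

lemma osq_eq (δ : ℝ) (c : ℤ × ℤ) : osq δ c =
    Set.Ioo (c.1 * δ) ((c.1 + 1) * δ) ×ℂ Set.Ioo (c.2 * δ) ((c.2 + 1) * δ) := by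
  ext z
  simp [osq, Complex.mem_reProdIm]

lemma volume_osq (δ : ℝ) (hδ : 0 < δ) (c : ℤ × ℤ) :
    volume (osq δ c) = ENNReal.ofReal δ ^ 2 := by
  have h1 : osq δ c = Complex.measurableEquivRealProd ⁻¹'
      (Set.Ioo (c.1 * δ) ((c.1 + 1) * δ) ×ˢ Set.Ioo (c.2 * δ) ((c.2 + 1) * δ)) := by
    ext z
    simp [osq, Complex.measurableEquivRealProd]
  rw [h1, Complex.volume_preserving_equiv_real_prod.measure_preimage_equiv,
    Measure.volume_eq_prod, Measure.prod_prod, Real.volume_Ioo, Real.volume_Ioo, sq]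
  congr 2 <;> ring

lemma osq_measurable (δ : ℝ) (c : ℤ × ℤ) : MeasurableSet (osq δ c) := by
  rw [osq_eq]
  exact (isOpen_Ioo.reProdIm isOpen_Ioo).measurableSet

lemma int_unique (δ : ℝ) (hδ : 0 < δ) (k l : ℤ) (x : ℝ) (h1 : k * δ < x) (h2 : x < (k + 1) * δ)
    (h3 : l * δ ≤ x) (h4 : x < (l + 1) * δ) : k = l := by
  have a1 : (k : ℝ) < l + 1 := lt_of_mul_lt_mul_right (h1.trans h4) hδ.le
  have a2 : (l : ℝ) < k + 1 := lt_of_mul_lt_mul_right (h3.trans_lt h2) hδ.le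
  have b1 : k < l + 1 := by exact_mod_cast a1
  have b2 : l < k + 1 := by exact_mod_cast a2
  omega

lemma osq_unique (δ : ℝ) (hδ : 0 < δ) (c d : ℤ × ℤ) (z : ℂ) (h : z ∈ osq δ c) (h' : z ∈ osq δ d) :
    c = d := by
  obtain ⟨⟨h1, h2⟩, h3, h4⟩ := h
  obtain ⟨⟨h5, h6⟩, h7, h8⟩ := h'
  exact Prod.ext (int_unique δ hδ _ _ _ h1 h2 h5.le h6) (int_unique δ hδ _ _ _ h3 h4 h7.le h8)

lemma ocell_unique {I : Type} (q : I → ℝ × ℝ × ℝ) (δ : ℝ) (hδ : 0 < δ)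
    (c d : (ℤ × ℤ) × (I → Bool)) (z : ℂ)
    (h : z ∈ ocell (cellp q δ c)) (h' : z ∈ ocell (cellp q δ d)) : c = d := by
  rw [mem_ocell_cellp] at h h'
  refine Prod.ext (osq_unique δ hδ _ _ z h.1 h'.1) ?_
  funext i
  have h1 := h.2 i
  have h2 := h'.2 i
  cases hc : c.2 i <;> cases hd : d.2 i <;> simp [hc, hd, sg] at h1 h2 ⊢ <;> linarith

lemma exists_ocell {I : Type} (q : I → ℝ × ℝ × ℝ) (δ : ℝ) (hδ : 0 < δ) (z : ℂ)
    (hre : ∀ k : ℤ, z.re ≠ k * δ) (him : ∀ k : ℤ, z.im ≠ k * δ) (hq : ∀ i, aff (q i) z ≠ 0) :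
    ∃ c, z ∈ ocell (cellp q δ c) := by
  classical
  refine ⟨((⌊z.re / δ⌋, ⌊z.im / δ⌋), fun i => decide (0 < aff (q i) z)), ?_⟩
  rw [mem_ocell_cellp]
  have hfl : ∀ x : ℝ, (∀ k : ℤ, x ≠ k * δ) → ⌊x / δ⌋ * δ < x ∧ x < (⌊x / δ⌋ + 1) * δ := by
    intro x hx
    constructor
    · refine lt_of_le_of_ne ?_ (hx _).symm
      rw [← le_div_iff₀ hδ]
      exact Int.floor_le _
    · rw [← div_lt_iff₀ hδ]
      exact Int.lt_floor_add_one _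
  refine ⟨⟨hfl _ hre, hfl _ him⟩, fun i => ?_⟩
  by_cases h : 0 < aff (q i) z
  · simp [h, sg]
  · have : aff (q i) z < 0 := lt_of_le_of_ne (not_lt.1 h) (hq i)
    simp [h, sg, this]

lemma generic_dense {I : Type} [Fintype I] (q : I → ℝ × ℝ × ℝ)
    (hq : ∀ i, (q i).1 ≠ 0 ∨ (q i).2.1 ≠ 0) (δ : ℝ) :
    Dense {z : ℂ | (∀ k : ℤ, z.re ≠ k * δ) ∧ (∀ k : ℤ, z.im ≠ k * δ) ∧ ∀ i, aff (q i) z ≠ 0} := by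
  refine Measure.dense_of_ae (μ := volume) ?_
  have h1 : ∀ k : ℤ, ∀ᵐ z : ℂ, z.re ≠ k * δ := by
    intro k
    have := line_null (1, 0, -(k * δ)) (by simp)
    rw [ae_iff]
    refine measure_mono_null ?_ this
    intro z hz
    have hz' : z.re = k * δ := by simpa using hz
    simp [aff, hz']
  have h2 : ∀ k : ℤ, ∀ᵐ z : ℂ, z.im ≠ k * δ := by
    intro k
    have := line_null (0, 1, -(k * δ)) (by simp)
    rw [ae_iff]
    refine measure_mono_null ?_ this
    intro z hz
    have hz' : z.im = k * δ := by simpa using hz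
    simp [aff, hz']
  have h3 : ∀ i, ∀ᵐ z : ℂ, aff (q i) z ≠ 0 := by
    intro i
    rw [ae_iff]
    simpa using line_null (q i) (hq i)
  filter_upwards [ae_all_iff.2 h1, ae_all_iff.2 h2, ae_all_iff.2 h3] with z a b c
  exact ⟨a, b, c⟩

lemma ccell_compact {I : Type} (q : I → ℝ × ℝ × ℝ) (δ : ℝ) (c : (ℤ × ℤ) × (I → Bool)) :
    IsCompact (ccell (cellp q δ c)) := by
  refine Metric.isCompact_of_isClosed_isBounded (ccell_isClosed _) ?_
  rw [Metric.isBounded_iff]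
  refine ⟨2 * δ, fun x hx y hy => ?_⟩
  rw [mem_ccell_cellp] at hx hy
  exact (csq_dist δ _ x y hx.1 hy.1).2.2

/-! ### Part 6: lengths of the cell boundaries -/

lemma face_inl_measure {I : Type} (q : I → ℝ × ℝ × ℝ) (δ : ℝ) (c : (ℤ × ℤ) × (I → Bool))
    (hO : (ocell (cellp q δ c)).Nonempty) (j : Fin 4) :
    Measure.hausdorffMeasure 1 (face (cellp q δ c) (.inl j)) ≤ ENNReal.ofReal δ := by
  refine face_measure _ hO (ccell_compact q δ c) _ _ fun x hx y hy => ?_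
  obtain ⟨hx1, hx2⟩ := hx
  obtain ⟨hy1, hy2⟩ := hy
  have hx3 : aff (cellp q δ c (.inl j)) x = 0 := hx2
  have hy3 : aff (cellp q δ c (.inl j)) y = 0 := hy2
  rw [mem_ccell_cellp] at hx1 hy1
  obtain ⟨h1, h2, -⟩ := csq_dist δ _ x y hx1.1 hy1.1
  rw [edist_dist, dist_eq_norm]
  refine ENNReal.ofReal_le_ofReal ?_
  have h3 := Complex.norm_le_abs_re_add_abs_im (x - y)
  simp only [Complex.sub_re, Complex.sub_im] at h3
  have h4 : x.re - y.re = 0 ∨ x.im - y.im = 0 := by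
    fin_cases j <;> simp [aff, cellp] at hx3 hy3
    · left; linarith
    · left; linarith
    · right; linarith
    · right; linarith
  rcases h4 with h | h <;> rw [h, abs_zero] at h3 <;> linarith

lemma face_inr_measure {I : Type} (q : I → ℝ × ℝ × ℝ) (δ : ℝ) (c : (ℤ × ℤ) × (I → Bool))
    (hO : (ocell (cellp q δ c)).Nonempty) (i : I) :
    Measure.hausdorffMeasure 1 (face (cellp q δ c) (.inr i)) ≤ ENNReal.ofReal (2 * δ) := by
  refine face_measure _ hO (ccell_compact q δ c) _ _ fun x hx y hy => ?_
  have hx1 := hx.1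
  have hy1 := hy.1
  rw [mem_ccell_cellp] at hx1 hy1
  rw [edist_dist]
  exact ENNReal.ofReal_le_ofReal (csq_dist δ _ x y hx1.1 hy1.1).2.2

lemma frontier_len_general {I : Type} [Fintype I] (q : I → ℝ × ℝ × ℝ) (δ : ℝ) (hδ : 0 < δ)
    (c : (ℤ × ℤ) × (I → Bool)) (hO : (ocell (cellp q δ c)).Nonempty) :
    Measure.hausdorffMeasure 1 (frontier (ccell (cellp q δ c))) ≤
      ENNReal.ofReal ((4 + 2 * Fintype.card I) * δ) := by
  rw [frontier_ccell _ hO]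
  refine (measure_iUnion_fintype_le _ _).trans ?_
  rw [Fintype.sum_sum_type]
  have h1 : ∑ j : Fin 4, Measure.hausdorffMeasure 1 (face (cellp q δ c) (.inl j)) ≤
      ENNReal.ofReal (4 * δ) := by
    refine (Finset.sum_le_sum fun j _ => face_inl_measure q δ c hO j).trans ?_
    rw [Finset.sum_const, nsmul_eq_mul, ENNReal.ofReal_mul (by norm_num)]
    simp
  have h2 : ∑ i : I, Measure.hausdorffMeasure 1 (face (cellp q δ c) (.inr i)) ≤
      ENNReal.ofReal (2 * Fintype.card I * δ) := by
    refine (Finset.sum_le_sum fun j _ => face_inr_measure q δ c hO j).trans ?_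
    rw [Finset.sum_const, nsmul_eq_mul,
      show (2 * Fintype.card I * δ : ℝ) = Fintype.card I * (2 * δ) by ring,
      ENNReal.ofReal_mul (p := (Fintype.card I : ℝ)) (by positivity)]
    simp
  refine (add_le_add h1 h2).trans ?_
  rw [← ENNReal.ofReal_add (by positivity) (by positivity)]
  exact ENNReal.ofReal_le_ofReal (by linarith)

lemma osq_convex (δ : ℝ) (c : ℤ × ℤ) : Convex ℝ (osq δ c) := by
  rw [osq_eq]
  exact ((convex_Ioo _ _).linear_preimage Complex.reLm).inter
    ((convex_Ioo _ _).linear_preimage Complex.imLm)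

lemma good_eq {I : Type} (q : I → ℝ × ℝ × ℝ) (δ : ℝ)
    (c : (ℤ × ℤ) × (I → Bool)) (hO : (ocell (cellp q δ c)).Nonempty)
    (hg : ∀ z ∈ osq δ c.1, ∀ i, aff (q i) z ≠ 0) : ocell (cellp q δ c) = osq δ c.1 := by
  ext z
  rw [mem_ocell_cellp]
  refine ⟨fun h => h.1, fun hz => ⟨hz, fun i => ?_⟩⟩
  obtain ⟨w, hw⟩ := hO
  rw [mem_ocell_cellp] at hw
  have ha := hw.2 i
  by_contra hb
  rw [not_lt] at hb
  set a := sg (c.2 i) * aff (q i) w with hadef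
  set b := sg (c.2 i) * aff (q i) z with hbdef
  have hab : 0 < a - b := by linarith
  have hsum : -b / (a - b) + a / (a - b) = 1 := by field_simp; ring
  have hmem := osq_convex δ c.1 hw.1 hz (div_nonneg (by linarith) hab.le : 0 ≤ -b / (a - b))
    (div_nonneg ha.le hab.le : 0 ≤ a / (a - b)) hsum
  refine hg _ hmem i ?_
  rw [aff_comb _ _ _ _ _ hsum]
  have hsg : sg (c.2 i) ≠ 0 := by
    intro h
    rw [hadef, h, zero_mul] at ha
    exact lt_irrefl _ ha
  refine (mul_eq_zero.1 (?_ : sg (c.2 i) * _ = 0)).resolve_left hsg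
  have : sg (c.2 i) * (-b / (a - b) * aff (q i) w + a / (a - b) * aff (q i) z) =
      -b / (a - b) * a + a / (a - b) * b := by rw [hadef, hbdef]; ring
  rw [this]
  ring

lemma frontier_len_good {I : Type} [Fintype I] (q : I → ℝ × ℝ × ℝ) (δ : ℝ)
    (c : (ℤ × ℤ) × (I → Bool)) (hO : (ocell (cellp q δ c)).Nonempty)
    (hg : ∀ z ∈ osq δ c.1, ∀ i, aff (q i) z ≠ 0) :
    Measure.hausdorffMeasure 1 (frontier (ccell (cellp q δ c))) ≤ 4 * ENNReal.ofReal δ := by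
  have hsub : frontier (ccell (cellp q δ c)) ⊆ ⋃ j : Fin 4, face (cellp q δ c) (.inl j) := by
    intro z hz
    rw [(ccell_isClosed _).frontier_eq, interior_ccell _ hO, good_eq q δ c hO hg] at hz
    obtain ⟨hz1, hz2⟩ := hz
    have hz3 := hz1
    rw [mem_ccell_cellp] at hz3
    obtain ⟨⟨⟨h1, h2⟩, h3, h4⟩, -⟩ := hz3
    by_contra hcon
    simp only [Set.mem_iUnion, not_exists] at hcon
    have hne : ∀ j : Fin 4, aff (cellp q δ c (.inl j)) z ≠ 0 := fun j h => hcon j ⟨hz1, h⟩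
    refine hz2 ⟨⟨h1.lt_of_ne fun h => hne 0 ?_, h2.lt_of_ne fun h => hne 1 ?_⟩,
      h3.lt_of_ne fun h => hne 2 ?_, h4.lt_of_ne fun h => hne 3 ?_⟩
    all_goals
      simp only [aff, cellp]
      linarith
  refine (measure_mono hsub).trans ((measure_iUnion_fintype_le _ _).trans ?_)
  refine (Finset.sum_le_sum fun j _ => face_inl_measure q δ c hO j).trans ?_
  simp

/-! ### Part 7: the cells inside a polygonal disk -/

/-- Labels of the nonempty cells contained in the interior of `P`. -/
def cells {I : Type} (P : Set ℂ) (q : I → ℝ × ℝ × ℝ) (δ : ℝ) : Set ((ℤ × ℤ) × (I → Bool)) :=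
  {c | (ocell (cellp q δ c)).Nonempty ∧ ocell (cellp q δ c) ⊆ interior P}

lemma mem_cells {I : Type} (P : Set ℂ) (q : I → ℝ × ℝ × ℝ) (δ : ℝ)
    (hf : ∀ z ∈ frontier P, ∃ i, aff (q i) z = 0) (c : (ℤ × ℤ) × (I → Bool)) (z : ℂ)
    (hz : z ∈ ocell (cellp q δ c)) (hzP : z ∈ interior P) : c ∈ cells P q δ := by
  refine ⟨⟨z, hz⟩, ?_⟩
  have hdis : ∀ w ∈ ocell (cellp q δ c), w ∉ frontier P := by
    intro w hw hwf
    obtain ⟨i, hi⟩ := hf w hwf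
    rw [mem_ocell_cellp] at hw
    have := hw.2 i
    rw [hi, mul_zero] at this
    exact lt_irrefl _ this
  have hpre := (ocell_convex (cellp q δ c)).isPreconnected
  have hcov : ocell (cellp q δ c) ⊆ interior P ∪ (closure P)ᶜ := by
    intro w hw
    by_cases h : w ∈ closure P
    · left
      by_contra hcon
      exact hdis w hw ⟨h, hcon⟩
    · exact Or.inr h
  have hemp : ocell (cellp q δ c) ∩ (interior P ∩ (closure P)ᶜ) = ∅ := by
    rw [Set.eq_empty_iff_forall_notMem]
    rintro w ⟨-, h1, h2⟩
    exact h2 (subset_closure (interior_subset h1))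
  rcases isPreconnected_iff_subset_of_disjoint.1 hpre (interior P) (closure P)ᶜ isOpen_interior
    isClosed_closure.isOpen_compl hcov hemp with h | h
  · exact h
  · exact absurd (subset_closure (interior_subset hzP)) (h hz)

lemma cells_finite {I : Type} [Fintype I] (P : Set ℂ) (hP : IsCompact P) (q : I → ℝ × ℝ × ℝ)
    (δ : ℝ) (hδ : 0 < δ) : (cells P q δ).Finite := by
  obtain ⟨R, hR⟩ := hP.isBounded.subset_closedBall (0 : ℂ)
  let M : ℤ := ⌈R / δ⌉ + 1
  refine ((Set.finite_Icc ((-M, -M) : ℤ × ℤ) (M, M)).prod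
    (Set.finite_univ (α := I → Bool))).subset ?_
  rintro c ⟨⟨z, hz⟩, hsub⟩
  have hzR := hR (interior_subset (hsub hz))
  rw [mem_closedBall_zero_iff] at hzR
  rw [mem_ocell_cellp] at hz
  obtain ⟨⟨⟨h1, h2⟩, h3, h4⟩, -⟩ := hz
  have key : ∀ (k : ℤ) (x : ℝ), |x| ≤ R → k * δ < x → x < (k + 1) * δ → -M ≤ k ∧ k ≤ M := by
    intro k x hx ha hb
    have hx' := abs_le.1 hx
    have hc := Int.le_ceil (R / δ)
    rw [div_le_iff₀ hδ] at hc
    have e1 : (k : ℝ) < (⌈R / δ⌉ : ℤ) := by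
      refine lt_of_mul_lt_mul_right (a := δ) ?_ hδ.le
      linarith
    have e2 : ((-⌈R / δ⌉ : ℤ) : ℝ) < k + 1 := by
      refine lt_of_mul_lt_mul_right (a := δ) ?_ hδ.le
      push_cast
      linarith
    have f1 : k < ⌈R / δ⌉ := by exact_mod_cast e1
    have f2 : -⌈R / δ⌉ < k + 1 := by exact_mod_cast e2
    simp only [M]
    omega
  have a := key _ _ ((Complex.abs_re_le_norm z).trans hzR) h1 h2
  have b := key _ _ ((Complex.abs_im_le_norm z).trans hzR) h3 h4
  exact ⟨⟨⟨a.1, b.1⟩, a.2, b.2⟩, Set.mem_univ _⟩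

lemma cells_union {I : Type} [Fintype I] (P : Set ℂ) (hP : IsCompact P)
    (hcl : P ⊆ closure (interior P)) (q : I → ℝ × ℝ × ℝ)
    (hq : ∀ i, (q i).1 ≠ 0 ∨ (q i).2.1 ≠ 0)
    (hf : ∀ z ∈ frontier P, ∃ i, aff (q i) z = 0)
    (δ : ℝ) (hδ : 0 < δ) : ⋃ c ∈ cells P q δ, ccell (cellp q δ c) = P := by
  apply Set.Subset.antisymm
  · refine Set.iUnion₂_subset fun c hc => ?_
    refine (ccell_subset_closure _ hc.1).trans ?_
    exact hP.isClosed.closure_subset_iff.2 (hc.2.trans interior_subset)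
  · have hclosed : IsClosed (⋃ c ∈ cells P q δ, ccell (cellp q δ c)) :=
      (cells_finite P hP q δ hδ).isClosed_biUnion fun c _ => ccell_isClosed _
    refine hcl.trans (hclosed.closure_subset_iff.2 ?_)
    refine ((generic_dense q hq δ).open_subset_closure_inter isOpen_interior).trans
      (hclosed.closure_subset_iff.2 ?_)
    rintro z ⟨hz, h1, h2, h3⟩
    obtain ⟨c, hc⟩ := exists_ocell q δ hδ z h1 h2 h3
    exact Set.mem_biUnion (mem_cells P q δ hf c z hc hz) (ocell_subset _ hc)

/-- The union of the boundaries of the cells. -/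
def skel {I : Type} (P : Set ℂ) (q : I → ℝ × ℝ × ℝ) (δ : ℝ) : Set ℂ :=
  ⋃ c ∈ cells P q δ, frontier (ccell (cellp q δ c))

lemma mem_skel {I : Type} [Fintype I] (P : Set ℂ) (hP : IsCompact P)
    (hcl : P ⊆ closure (interior P)) (q : I → ℝ × ℝ × ℝ)
    (hq : ∀ i, (q i).1 ≠ 0 ∨ (q i).2.1 ≠ 0)
    (hf : ∀ z ∈ frontier P, ∃ i, aff (q i) z = 0)
    (δ : ℝ) (hδ : 0 < δ) (z : ℂ) (hz : z ∈ P)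
    (h : (∃ k : ℤ, z.re = k * δ) ∨ (∃ k : ℤ, z.im = k * δ) ∨ ∃ i, aff (q i) z = 0) :
    z ∈ skel P q δ := by
  rw [← cells_union P hP hcl q hq hf δ hδ] at hz
  obtain ⟨c, hc, hz⟩ := Set.mem_iUnion₂.1 hz
  refine Set.mem_iUnion₂.2 ⟨c, hc, ?_⟩
  rw [(ccell_isClosed _).frontier_eq, interior_ccell _ hc.1]
  refine ⟨hz, fun hcon => ?_⟩
  rw [mem_ocell_cellp] at hcon
  obtain ⟨⟨⟨h1, h2⟩, h3, h4⟩, h5⟩ := hcon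
  have key : ∀ (k l : ℤ) (x : ℝ), x = k * δ → l * δ < x → x < (l + 1) * δ → False := by
    intro k l x hx ha hb
    rw [hx] at ha hb
    have e1 := lt_of_mul_lt_mul_right ha hδ.le
    have e2 := lt_of_mul_lt_mul_right hb hδ.le
    have f1 : l < k := by exact_mod_cast e1
    have f2 : k < l + 1 := by exact_mod_cast e2
    omega
  rcases h with ⟨k, hk⟩ | ⟨k, hk⟩ | ⟨i, hi⟩
  · exact key k _ _ hk h1 h2
  · exact key k _ _ hk h3 h4
  · have := h5 i
    rw [hi, mul_zero] at this
    exact lt_irrefl _ this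

lemma skel_line {I : Type} [Fintype I] (P : Set ℂ) (q : I → ℝ × ℝ × ℝ)
    (δ : ℝ) (z : ℂ) (hz : z ∈ skel P q δ) :
    (∃ k : ℤ, z.re = k * δ) ∨ (∃ k : ℤ, z.im = k * δ) ∨ ∃ i, aff (q i) z = 0 := by
  obtain ⟨c, hc, hz⟩ := Set.mem_iUnion₂.1 hz
  rw [frontier_ccell _ hc.1] at hz
  obtain ⟨j, -, hj⟩ := Set.mem_iUnion.1 hz
  have hj' : aff (cellp q δ c j) z = 0 := hj
  rcases j with j | i
  · fin_cases j <;> simp [aff, cellp] at hj'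
    · exact Or.inl ⟨c.1.1, by linarith⟩
    · exact Or.inl ⟨c.1.1 + 1, by push_cast; linarith⟩
    · exact Or.inr (Or.inl ⟨c.1.2, by linarith⟩)
    · exact Or.inr (Or.inl ⟨c.1.2 + 1, by push_cast; linarith⟩)
  · refine Or.inr (Or.inr ⟨i, ?_⟩)
    have h1 : aff (cellp q δ c (.inr i)) z = sg (c.2 i) * aff (q i) z := by
      simp [aff, cellp]
      ring
    rw [h1] at hj'
    refine (mul_eq_zero.1 hj').resolve_left ?_
    cases c.2 i <;> simp [sg]

lemma skel_dir {I : Type} [Fintype I] (P : Set ℂ) (hP : IsCompact P)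
    (hcl : P ⊆ closure (interior P)) (q : I → ℝ × ℝ × ℝ)
    (hq : ∀ i, (q i).1 ≠ 0 ∨ (q i).2.1 ≠ 0)
    (hf : ∀ z ∈ frontier P, ∃ i, aff (q i) z = 0)
    (δ : ℝ) (hδ : 0 < δ) (z : ℂ) (hz : z ∈ skel P q δ) :
    ∃ u : ℂ, u ≠ 0 ∧ ∀ t : ℝ, z + t * u ∈ P → z + t * u ∈ skel P q δ := by
  rcases skel_line P q δ z hz with ⟨k, hk⟩ | ⟨k, hk⟩ | ⟨i, hi⟩
  · refine ⟨Complex.I, Complex.I_ne_zero, fun t ht => ?_⟩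
    exact mem_skel P hP hcl q hq hf δ hδ _ ht (Or.inl ⟨k, by simp [hk]⟩)
  · refine ⟨1, one_ne_zero, fun t ht => ?_⟩
    exact mem_skel P hP hcl q hq hf δ hδ _ ht (Or.inr (Or.inl ⟨k, by simp [hk]⟩))
  · refine ⟨⟨-(q i).2.1, (q i).1⟩, fun h => ?_, fun t ht => ?_⟩
    · have h1 := congrArg Complex.re h
      have h2 := congrArg Complex.im h
      simp at h1 h2
      rcases hq i with h | h
      · exact h h2
      · exact h h1
    · refine mem_skel P hP hcl q hq hf δ hδ _ ht (Or.inr (Or.inr ⟨i, ?_⟩))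
      simp only [aff] at hi ⊢
      simp
      linarith

/-! ### Part 8: the sum of squares -/

lemma sum_sq_bound {I : Type} [Fintype I] [DecidableEq I] (P : Set ℂ) (q : I → ℝ × ℝ × ℝ)
    (δ : ℝ) (hδ : 0 < δ) (S : Finset ((ℤ × ℤ) × (I → Bool))) (hS : ∀ c ∈ S, c ∈ cells P q δ)
    (T : Set ℂ)
    (hT : ∀ c ∈ S, (∃ z ∈ osq δ c.1, ∃ i, aff (q i) z = 0) → osq δ c.1 ⊆ T) :
    ∑ c ∈ S, (Measure.hausdorffMeasure 1 (frontier (ccell (cellp q δ c)))) ^ 2 ≤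
      16 * volume P +
        Fintype.card (I → Bool) * ENNReal.ofReal (4 + 2 * Fintype.card I) ^ 2 * volume T := by
  classical
  let bad : (ℤ × ℤ) × (I → Bool) → Prop := fun c => ∃ z ∈ osq δ c.1, ∃ i, aff (q i) z = 0
  rw [← Finset.sum_filter_not_add_sum_filter S bad]
  refine add_le_add ?_ ?_
  · have h1 : ∀ c ∈ S.filter (fun c => ¬ bad c),
        (Measure.hausdorffMeasure 1 (frontier (ccell (cellp q δ c)))) ^ 2 ≤
          16 * volume (ocell (cellp q δ c)) := by
      intro c hc
      obtain ⟨hc1, hc2⟩ := Finset.mem_filter.1 hc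
      have hg : ∀ z ∈ osq δ c.1, ∀ i, aff (q i) z ≠ 0 :=
        fun z hz i hi => hc2 ⟨z, hz, i, hi⟩
      have hO := (hS c hc1).1
      rw [good_eq q δ c hO hg, volume_osq δ hδ]
      calc _ ≤ (4 * ENNReal.ofReal δ) ^ 2 := by
            gcongr
            exact frontier_len_good q δ c hO hg
        _ = _ := by rw [mul_pow]; norm_num
    refine (Finset.sum_le_sum h1).trans ?_
    rw [← Finset.mul_sum]
    gcongr
    rw [← measure_biUnion_finset]
    · refine measure_mono (Set.iUnion₂_subset fun c hc => ?_)
      exact (hS c (Finset.mem_filter.1 hc).1).2.trans interior_subset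
    · intro c _ d _ hcd
      refine Set.disjoint_left.2 fun z hz hz' => hcd (ocell_unique q δ hδ c d z hz hz')
    · intro c _
      exact (ocell_isOpen _).measurableSet
  · let B := (S.filter bad).image Prod.fst
    set κ := ENNReal.ofReal (4 + 2 * Fintype.card I) ^ 2 with hκ
    have h1 : ∀ c ∈ S.filter bad,
        (Measure.hausdorffMeasure 1 (frontier (ccell (cellp q δ c)))) ^ 2 ≤
          κ * volume (osq δ c.1) := by
      intro c hc
      obtain ⟨hc1, hc2⟩ := Finset.mem_filter.1 hc
      rw [volume_osq δ hδ, hκ, ← mul_pow, ← ENNReal.ofReal_mul (by positivity)]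
      gcongr
      exact frontier_len_general q δ hδ c (hS c hc1).1
    refine (Finset.sum_le_sum h1).trans ?_
    have h2 : S.filter bad ⊆ B ×ˢ (Finset.univ : Finset (I → Bool)) := by
      intro c hc
      exact Finset.mem_product.2 ⟨Finset.mem_image_of_mem _ hc, Finset.mem_univ _⟩
    refine (Finset.sum_le_sum_of_subset h2).trans ?_
    rw [Finset.sum_product]
    simp only [Finset.sum_const, nsmul_eq_mul, Finset.card_univ]
    rw [← Finset.mul_sum, ← Finset.mul_sum, mul_assoc]
    gcongr
    rw [← measure_biUnion_finset]
    · refine measure_mono (Set.iUnion₂_subset fun b hb => ?_)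
      obtain ⟨c, hc, rfl⟩ := Finset.mem_image.1 hb
      obtain ⟨hc1, hc2⟩ := Finset.mem_filter.1 hc
      exact hT c hc1 hc2
    · intro c _ d _ hcd
      refine Set.disjoint_left.2 fun z hz hz' => hcd (osq_unique δ hδ c d z hz hz')
    · intro c _
      exact osq_measurable δ c

lemma choose_delta (K : Set ℂ) (hK : IsCompact K) (hK0 : volume K = 0) (V C : ℝ≥0∞) (hV : 0 < V)
    (hC : C ≠ ⊤) (ε A : ℝ) (hε : 0 < ε) :
    ∃ δ : ℝ, 0 < δ ∧ δ ≤ 1 ∧ A * δ < ε ∧ C * volume (cthickening (2 * δ) K) ≤ V := by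
  have h1 : Filter.Tendsto (fun δ : ℝ => C * volume (cthickening (2 * δ) K)) (nhds 0)
      (nhds (C * volume K)) := by
    refine ENNReal.Tendsto.const_mul ?_ (Or.inr hC)
    have h2 : Filter.Tendsto (fun δ : ℝ => 2 * δ) (nhds 0) (nhds 0) := by
      have : Continuous fun δ : ℝ => 2 * δ := by fun_prop
      simpa using this.tendsto 0
    exact (tendsto_measure_cthickening_of_isCompact hK).comp h2
  rw [hK0, mul_zero] at h1
  have e1 := h1.eventually (gt_mem_nhds hV)
  have e2 : ∀ᶠ δ : ℝ in nhds 0, A * δ < ε := by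
    have : Continuous fun δ : ℝ => A * δ := by fun_prop
    have := this.tendsto 0
    rw [mul_zero] at this
    exact this.eventually (gt_mem_nhds hε)
  have e3 : ∀ᶠ δ : ℝ in nhds 0, δ < 1 := gt_mem_nhds one_pos
  have e4 : ∀ᶠ δ : ℝ in nhdsWithin 0 (Set.Ioi 0), 0 < δ := self_mem_nhdsWithin
  obtain ⟨δ, ⟨h1, h2, h3⟩, h4⟩ :=
    (((e1.and (e2.and e3)).filter_mono nhdsWithin_le_nhds).and e4).exists
  exact ⟨δ, h4, h3.le, h2, h1.le⟩

/-- Coefficients of the line through two points. -/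
def lineq (e : ℂ × ℂ) : ℝ × ℝ × ℝ :=
  (-(e.2 - e.1).im, (e.2 - e.1).re, (e.2 - e.1).im * e.1.re - (e.2 - e.1).re * e.1.im)

lemma lineq_ne (e : ℂ × ℂ) (he : e.1 ≠ e.2) : (lineq e).1 ≠ 0 ∨ (lineq e).2.1 ≠ 0 := by
  by_contra hcon
  push Not at hcon
  obtain ⟨h1, h2⟩ := hcon
  simp only [lineq, Complex.sub_re, Complex.sub_im] at h1 h2
  exact he (Complex.ext (by linarith) (by linarith))

lemma lineq_zero (e : ℂ × ℂ) (z : ℂ) (hz : z ∈ segment ℝ e.1 e.2) : aff (lineq e) z = 0 := by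
  obtain ⟨s, t, -, -, hst, rfl⟩ := hz
  rw [aff_comb _ _ _ _ _ hst]
  simp only [aff, lineq, Complex.sub_re, Complex.sub_im]
  ring

theorem polygonal_disk_decomposition (P : Set ℂ) (hP : IsPolygonalDisk P)
    (ε : ℝ) (hε : 0 < ε) :
    ∃ (n : ℕ) (Q : Fin n → Set ℂ),
      -- a decomposition of `P` into non-overlapping polygonal disks:
      (∀ k, IsPolygonalDisk (Q k)) ∧
      (⋃ k, Q k) = P ∧
      (∀ k l, k ≠ l → interior (Q k) ∩ interior (Q l) = ∅) ∧
      -- (i) each piece has boundary length less than ε: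
      (∀ k, MeasureTheory.Measure.hausdorffMeasure 1 (frontier (Q k)) < ENNReal.ofReal ε) ∧
      -- (ii) any two points of the union of the boundaries are joined by a path in that
      -- union of length at most ℓ(∂P):
      (∀ x ∈ ⋃ k, frontier (Q k), ∀ y ∈ ⋃ k, frontier (Q k),
        ∃ γ : ℝ → ℂ, ContinuousOn γ (Set.Icc 0 1) ∧ γ 0 = x ∧ γ 1 = y ∧
          γ '' Set.Icc 0 1 ⊆ ⋃ k, frontier (Q k) ∧
          eVariationOn γ (Set.Icc 0 1) ≤
            MeasureTheory.Measure.hausdorffMeasure 1 (frontier P)) ∧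
      -- (iii) the sum of the squared boundary lengths is at most 17·H²(P):
      (∑ k, (MeasureTheory.Measure.hausdorffMeasure 1 (frontier (Q k))) ^ 2 ≤
        17 * MeasureTheory.volume P) := by
  classical
  obtain ⟨hPc, hne, E, hE1, hE2, -⟩ := hP
  obtain ⟨-, -, -, -, hcl, hintr⟩ := disk_structure P hne hPc
  let q : ↥E → ℝ × ℝ × ℝ := fun e => lineq e
  have hq : ∀ i, (q i).1 ≠ 0 ∨ (q i).2.1 ≠ 0 := fun i => lineq_ne _ (hE1 i i.2)
  have hf : ∀ z ∈ frontier P, ∃ i, aff (q i) z = 0 := by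
    intro z hz
    rw [hE2] at hz
    obtain ⟨e, he, hz⟩ := Set.mem_iUnion₂.1 hz
    exact ⟨⟨e, he⟩, lineq_zero e z hz⟩
  obtain ⟨R, hR⟩ := hPc.isBounded.subset_closedBall (0 : ℂ)
  let K : Set ℂ := (⋃ i, {z | aff (q i) z = 0}) ∩ closedBall 0 (R + 2)
  have hK : IsCompact K := by
    refine (isCompact_closedBall _ _).inter_left (isClosed_iUnion_of_finite fun i => ?_)
    exact isClosed_eq (aff_continuous _) continuous_const
  have hK0 : volume K = 0 :=
    measure_mono_null Set.inter_subset_left (measure_iUnion_null fun i => line_null _ (hq i))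
  have hV : 0 < volume P :=
    (isOpen_interior.measure_pos volume hintr).trans_le (measure_mono interior_subset)
  obtain ⟨δ, hδ, hδ1, hδε, hδV⟩ := choose_delta K hK hK0 (volume P)
    (Fintype.card (↥E → Bool) * ENNReal.ofReal (4 + 2 * Fintype.card ↥E) ^ 2) hV
    (ENNReal.mul_ne_top (by simp) (by simp)) ε (4 + 2 * Fintype.card ↥E) hε
  let S := (cells_finite P hPc q δ hδ).toFinset
  have hS : ∀ c, c ∈ S ↔ c ∈ cells P q δ := fun c => Set.Finite.mem_toFinset _
  let Q : Fin S.card → Set ℂ := fun k => ccell (cellp q δ (S.equivFin.symm k))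
  have hmem : ∀ k, ((S.equivFin.symm k : ↥S) : (ℤ × ℤ) × (↥E → Bool)) ∈ cells P q δ :=
    fun k => (hS _).1 (S.equivFin.symm k).2
  have hG : ⋃ k, frontier (Q k) = skel P q δ := by
    ext z
    simp only [skel, Set.mem_iUnion]
    constructor
    · rintro ⟨k, hk⟩
      exact ⟨_, hmem k, hk⟩
    · rintro ⟨c, hc, hz⟩
      refine ⟨S.equivFin ⟨c, (hS c).2 hc⟩, ?_⟩
      simpa [Q] using hz
  have hU : ⋃ k, Q k = P := by
    rw [← cells_union P hPc hcl q hq hf δ hδ]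
    ext z
    simp only [Set.mem_iUnion]
    constructor
    · rintro ⟨k, hk⟩
      exact ⟨_, hmem k, hk⟩
    · rintro ⟨c, hc, hz⟩
      refine ⟨S.equivFin ⟨c, (hS c).2 hc⟩, ?_⟩
      simpa [Q] using hz
  refine ⟨S.card, Q, fun k => ?_, hU, fun k l hkl => ?_, fun k => ?_, fun x hx y hy => ?_, ?_⟩
  · exact ccell_polygonal _ (hmem k).1 (ccell_compact q δ _)
  · rw [Set.eq_empty_iff_forall_notMem]
    rintro z ⟨h1, h2⟩
    rw [interior_ccell _ (hmem _).1] at h1 h2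
    have h3 := ocell_unique q δ hδ _ _ z h1 h2
    exact hkl (S.equivFin.symm.injective (Subtype.ext h3))
  · exact (frontier_len_general q δ hδ _ (hmem k).1).trans_lt
      ((ENNReal.ofReal_lt_ofReal_iff hε).2 hδε)
  · rw [hG] at hx hy ⊢
    have hsub : skel P q δ ⊆ P := by
      rw [← hG, ← hU]
      refine Set.iUnion_mono fun k => ?_
      exact (ccell_isClosed _).frontier_subset
    exact skeleton_connected P hPc hne _ hsub
      (fun z hz => mem_skel P hPc hcl q hq hf δ hδ z (hPc.isClosed.frontier_subset hz)
        (Or.inr (Or.inr (hf z hz))))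
      (skel_dir P hPc hcl q hq hf δ hδ) x y hx hy
  · have hT : ∀ c ∈ S, (∃ z ∈ osq δ c.1, ∃ i, aff (q i) z = 0) →
        osq δ c.1 ⊆ cthickening (2 * δ) K := by
      rintro c hc ⟨z, hz, i, hi⟩ y hy
      obtain ⟨⟨w, hw⟩, hsub⟩ := (hS c).1 hc
      have hwR := hR (interior_subset (hsub hw))
      rw [mem_ocell_cellp] at hw
      have h1 := (csq_dist δ _ z w (osq_subset _ _ hz) (osq_subset _ _ hw.1)).2.2
      have h2 := (csq_dist δ _ y z (osq_subset _ _ hy) (osq_subset _ _ hz)).2.2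
      refine mem_cthickening_of_dist_le y z _ K ⟨Set.mem_iUnion.2 ⟨i, hi⟩, ?_⟩ h2
      rw [mem_closedBall] at hwR ⊢
      linarith [dist_triangle z w 0]
    have hsum := sum_sq_bound P q δ hδ S (fun c hc => (hS c).1 hc) _ hT
    have hre : ∑ k, (MeasureTheory.Measure.hausdorffMeasure 1 (frontier (Q k))) ^ 2 =
        ∑ c ∈ S, (Measure.hausdorffMeasure 1 (frontier (ccell (cellp q δ c)))) ^ 2 := by
      rw [← Finset.sum_coe_sort S]
      exact Equiv.sum_comp S.equivFin.symm
        fun c : ↥S => (Measure.hausdorffMeasure 1 (frontier (ccell (cellp q δ c)))) ^ 2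
    rw [hre]
    refine hsum.trans ((add_le_add le_rfl hδV).trans (le_of_eq ?_))
    rw [show (17 : ℝ≥0∞) = 16 + 1 by norm_num, add_mul, one_mul]
end

section
/- Let X be a length space homeomorphic to a closed topological disk, and let {X_n} be a sequence of length spaces each homeomorphic to X. Suppose there exists an approximately isometric sequence f_n : X_n → X of topological embeddings. Then liminf_{n→∞} diam(∂X_n) ≥ diam(∂X). -/
open Filter Metric
open scoped Topology ENNReal

/-!
STATEMENT 7: Lower semicontinuity of the boundary diameter.

Let `Y` be a length space homeomorphic to a closed topological disk and `Xₙ` length spaces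
homeomorphic to `Y`, with an approximately isometric sequence of topological embeddings
`fₙ : Xₙ → Y`.  Then `liminf diam(∂Xₙ) ≥ diam(∂Y)`.  The manifold boundary of a space
homeomorphic to the closed unit disk is the image of the unit circle under such a
homeomorphism (independent of the homeomorphism chosen), and we record homeomorphisms
`Φ : closed disk ≃ₜ Y` and `Φₙ : closed disk ≃ₜ Xₙ` explicitly; diameters are taken in
`[0,∞]` (`EMetric.diam`).
-/

/-- `f` is an `ε`-isometry: `f X` is `ε`-dense and `f` distorts distances by less than `ε`. -/
def IsEpsIsometry {X Y : Type*} [MetricSpace X] [MetricSpace Y] (ε : ℝ) (f : X → Y) : Prop :=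
  (∀ y : Y, ∃ x : X, dist y (f x) < ε) ∧ ∀ x x' : X, |dist x x' - dist (f x) (f x')| < ε

/-- A curve in a metric space: a continuous map on a compact interval. -/
structure Curve (X : Type*) [MetricSpace X] where
  a : ℝ
  b : ℝ
  hab : a ≤ b
  toFun : ℝ → X
  cont : ContinuousOn toFun (Set.Icc a b)

/-- The length of a curve: the total variation of its parametrization. -/
noncomputable def Curve.length {X : Type*} [MetricSpace X] (γ : Curve X) : ℝ≥0∞ :=
  eVariationOn γ.toFun (Set.Icc γ.a γ.b)

/-- A length space: the distance between any two points is the infimum of the lengths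
of curves joining them. -/
def IsLengthSpace (X : Type*) [MetricSpace X] : Prop :=
  ∀ x y : X, edist x y =
    ⨅ γ : {γ : Curve X // γ.toFun γ.a = x ∧ γ.toFun γ.b = y}, γ.1.length

/-- The unit circle, as a subset of the closed unit disk in `ℂ`. -/
def diskBoundary : Set ↥(Metric.closedBall (0 : ℂ) 1) :=
  {x : ↥(Metric.closedBall (0 : ℂ) 1) | ‖(x : ℂ)‖ = 1}

/-- Existence of a continuous logarithm is a homotopy invariant. -/
theorem homotopy_log {A : Type} [TopologicalSpace A] (H : unitInterval × A → ℂ)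
    (hH : Continuous H) (hne : ∀ x, H x ≠ 0)
    (h0 : ∃ L : A → ℂ, Continuous L ∧ ∀ a, Complex.exp (L a) = H (0, a)) :
    ∃ L : A → ℂ, Continuous L ∧ ∀ a, Complex.exp (L a) = H (1, a) := by
  obtain ⟨L, hL, hLH⟩ := h0
  let H' : C(unitInterval × A, {z : ℂ // z ≠ 0}) := ⟨fun x => ⟨H x, hne x⟩, by fun_prop⟩
  have H0 : ∀ a, H' (0, a) = (⟨_, Complex.exp_ne_zero (L a)⟩ : {z : ℂ // z ≠ 0}) :=
    fun a => Subtype.ext (hLH a).symm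
  let G := Complex.isCoveringMap_exp.liftHomotopy H' ⟨L, hL⟩ H0
  have hG := Complex.isCoveringMap_exp.liftHomotopy_lifts H' ⟨L, hL⟩ H0
  refine ⟨fun a => G (1, a), by fun_prop, fun a => ?_⟩
  have := congr_fun hG (1, a)
  exact congrArg Subtype.val this

/-- An odd nonvanishing function on the circle has no continuous logarithm. -/
theorem odd_no_log (u : sphere (0 : ℂ) 1 → ℂ) (hodd : ∀ x, u (-x) = - u x)
    (L : sphere (0 : ℂ) 1 → ℂ) (hL : Continuous L) (hu : ∀ x, Complex.exp (L x) = u x) :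
    False := by
  have hconn : IsPreconnected (sphere (0 : ℂ) 1) :=
    isPreconnected_sphere (by rw [Complex.rank_real_complex]; norm_num) _ _
  haveI : PreconnectedSpace (sphere (0 : ℂ) 1) := isPreconnected_iff_preconnectedSpace.1 hconn
  let d : sphere (0 : ℂ) 1 → ℂ := fun x => L (-x) - L x
  have hd : Continuous d := by
    have : Continuous fun x : sphere (0 : ℂ) 1 => -x := continuous_neg
    fun_prop
  have hexp : ∀ x, Complex.exp (d x) = -1 := by
    intro x
    have hne : u x ≠ 0 := by rw [← hu]; exact Complex.exp_ne_zero _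
    simp only [d]
    rw [Complex.exp_sub, hu, hu, hodd]
    field_simp
  have hz : ∃ x, (d x).im = 0 := by
    let x₀ : sphere (0 : ℂ) 1 := ⟨1, by simp⟩
    have hneg : (d (-x₀)).im = -(d x₀).im := by simp [d]
    have hc : Continuous fun x => (d x).im := Complex.continuous_im.comp hd
    have hr := (isPreconnected_range hc).ordConnected
    rcases le_total 0 (d x₀).im with h | h
    · exact hr.out (Set.mem_range_self (-x₀)) (Set.mem_range_self x₀)
        ⟨by simp only [hneg]; linarith, h⟩
    · exact hr.out (Set.mem_range_self x₀) (Set.mem_range_self (-x₀))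
        ⟨h, by simp only [hneg]; linarith⟩
  obtain ⟨x, hx⟩ := hz
  have h1 := congrArg Complex.re (hexp x)
  rw [Complex.exp_re, hx] at h1
  simp at h1
  linarith [Real.exp_pos (d x).re]

/-- Planar invariance of domain at the centre of the disk. -/
theorem image_mem_nhds_center (g : ℂ → ℂ) (hg : ContinuousOn g (closedBall 0 1))
    (hinj : Set.InjOn g (closedBall 0 1)) : g '' closedBall 0 1 ∈ 𝓝 (g 0) := by
  by_contra hcon
  have hCc : IsClosed (g '' sphere 0 1) :=
    ((isCompact_sphere (0 : ℂ) 1).image_of_continuousOn (hg.mono sphere_subset_closedBall)).isClosed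
  have h0C : g 0 ∈ (g '' sphere 0 1)ᶜ := by
    rintro ⟨x, hx, hxe⟩
    have := hinj (sphere_subset_closedBall hx) (by simp) hxe
    simp [this] at hx
  obtain ⟨δ, hδ, hball⟩ := Metric.isOpen_iff.1 hCc.isOpen_compl _ h0C
  have : ∃ c ∈ ball (g 0) δ, c ∉ g '' closedBall 0 1 := by
    by_contra! h
    exact hcon (mem_of_superset (ball_mem_nhds _ hδ) h)
  obtain ⟨c, hcδ, hc⟩ := this
  have hmem : ∀ (t : unitInterval) (x : sphere (0 : ℂ) 1),
      ((t : ℝ) : ℂ) * (x : ℂ) ∈ closedBall (0 : ℂ) 1 := by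
    intro t x
    have hx : ‖(x : ℂ)‖ = 1 := by simp
    simp only [mem_closedBall, dist_zero_right, norm_mul, hx, Complex.norm_real, mul_one,
      Real.norm_eq_abs, abs_of_nonneg t.2.1]
    exact t.2.2
  have hmem1 : ∀ x : sphere (0 : ℂ) 1, (x : ℂ) ∈ closedBall (0 : ℂ) 1 :=
    fun x => sphere_subset_closedBall x.2
  have hmemn : ∀ (t : unitInterval) (x : sphere (0 : ℂ) 1),
      -(((t : ℝ) : ℂ) * (x : ℂ)) ∈ closedBall (0 : ℂ) 1 := by
    intro t x
    have := hmem t x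
    simpa using this
  have c1 : Continuous fun p : unitInterval × sphere (0 : ℂ) 1 => g (((p.1 : ℝ) : ℂ) * (p.2 : ℂ)) :=
    hg.comp_continuous (by fun_prop) fun p => hmem p.1 p.2
  have c2 : Continuous fun p : unitInterval × sphere (0 : ℂ) 1 => g (p.2 : ℂ) :=
    hg.comp_continuous (by fun_prop) fun p => hmem1 p.2
  have c3 : Continuous fun p : unitInterval × sphere (0 : ℂ) 1 =>
      g (-(((p.1 : ℝ) : ℂ) * (p.2 : ℂ))) :=
    hg.comp_continuous (by fun_prop) fun p => hmemn p.1 p.2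
  have l1 := homotopy_log (fun p : unitInterval × sphere (0 : ℂ) 1 =>
      g (((p.1 : ℝ) : ℂ) * (p.2 : ℂ)) - c) (c1.sub continuous_const)
    (fun p h => hc ⟨_, hmem p.1 p.2, sub_eq_zero.1 h⟩)
    ⟨fun _ => Complex.log (g 0 - c), continuous_const, fun a => by
      have : g 0 - c ≠ 0 := fun h => hc ⟨0, by simp, sub_eq_zero.1 h⟩
      simp [Complex.exp_log this]⟩
  have l2 := homotopy_log (fun p : unitInterval × sphere (0 : ℂ) 1 =>
      g (p.2 : ℂ) - (c + ((p.1 : ℝ) : ℂ) * (g 0 - c))) (c2.sub (by fun_prop))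
    (fun p h => by
      have hseg : c + (p.1 : ℝ) • (g 0 - c) ∈ ball (g 0) δ :=
        (convex_ball (g 0) δ).add_smul_sub_mem hcδ (mem_ball_self hδ) p.1.2
      rw [Complex.real_smul, ← sub_eq_zero.1 h] at hseg
      exact hball hseg ⟨_, p.2.2, rfl⟩)
    (by simpa using l1)
  have l3 := homotopy_log (fun p : unitInterval × sphere (0 : ℂ) 1 =>
      g (p.2 : ℂ) - g (-(((p.1 : ℝ) : ℂ) * (p.2 : ℂ)))) (c2.sub c3)
    (fun p h => by
      have h2 := hinj (hmem1 p.2) (hmemn p.1 p.2) (sub_eq_zero.1 h)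
      have h3 : ((1 + (p.1 : ℝ) : ℝ) : ℂ) * (p.2 : ℂ) = 0 := by
        push_cast
        linear_combination h2
      rcases mul_eq_zero.1 h3 with h4 | h4
      · have := p.1.2.1
        have := Complex.ofReal_eq_zero.1 h4
        linarith
      · have hx : ‖(p.2 : ℂ)‖ = 1 := by simp
        rw [h4] at hx
        simp at hx)
    (by simpa using l2)
  obtain ⟨L, hL, hLe⟩ := l3
  exact odd_no_log (fun x => g (x : ℂ) - g (-(x : ℂ))) (fun x => by simp) L hL
    (fun x => by simpa using hLe x)

/-- Planar invariance of domain for the closed disk. -/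
theorem range_mem_nhds (h : closedBall (0 : ℂ) 1 → ℂ) (hc : Continuous h)
    (hinj : Function.Injective h) (z : closedBall (0 : ℂ) 1) (hz : ‖(z : ℂ)‖ < 1) :
    Set.range h ∈ 𝓝 (h z) := by
  classical
  let r : ℝ := 1 - ‖(z : ℂ)‖
  have hr : 0 < r := by simp only [r]; linarith
  have hm : ∀ w ∈ closedBall (0 : ℂ) 1, (z : ℂ) + r * w ∈ closedBall (0 : ℂ) 1 := by
    intro w hw
    simp only [mem_closedBall, dist_zero_right] at hw ⊢
    calc ‖(z : ℂ) + r * w‖ ≤ ‖(z : ℂ)‖ + ‖(r : ℂ) * w‖ := norm_add_le _ _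
      _ = ‖(z : ℂ)‖ + r * ‖w‖ := by
        rw [norm_mul, Complex.norm_real, Real.norm_eq_abs, abs_of_pos hr]
      _ ≤ ‖(z : ℂ)‖ + r * 1 := by gcongr
      _ = 1 := by simp [r]
  let g : ℂ → ℂ := fun w =>
    if hw : w ∈ closedBall (0 : ℂ) 1 then h ⟨(z : ℂ) + r * w, hm w hw⟩ else 0
  have hgv : ∀ w (hw : w ∈ closedBall (0 : ℂ) 1), g w = h ⟨(z : ℂ) + r * w, hm w hw⟩ :=
    fun w hw => dif_pos hw
  have hgc : ContinuousOn g (closedBall 0 1) := by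
    rw [continuousOn_iff_continuous_domRestrict]
    have : (closedBall (0 : ℂ) 1).domRestrict g =
        fun w : closedBall (0 : ℂ) 1 => h ⟨(z : ℂ) + r * (w : ℂ), hm w w.2⟩ := by
      ext w
      exact hgv w w.2
    rw [this]
    fun_prop
  have hgi : Set.InjOn g (closedBall 0 1) := by
    intro a ha b hb hab
    rw [hgv a ha, hgv b hb] at hab
    have h1 := congrArg Subtype.val (hinj hab)
    have hr' : (r : ℂ) ≠ 0 := by exact_mod_cast hr.ne'
    exact mul_left_cancel₀ hr' (add_left_cancel h1)
  have key := image_mem_nhds_center g hgc hgi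
  have h0 : g 0 = h z := by
    rw [hgv 0 (by simp)]
    congr 1
    ext
    simp
  rw [h0] at key
  refine mem_of_superset key ?_
  rintro _ ⟨w, hw, rfl⟩
  rw [hgv w hw]
  exact Set.mem_range_self _

/-- Boundary points of the target are close to the image of the boundary. -/
theorem boundary_near {X Y : Type} [MetricSpace X] [MetricSpace Y] (hYlen : IsLengthSpace Y)
    (Φ : ↥(Metric.closedBall (0 : ℂ) 1) ≃ₜ Y) (Ψ : ↥(Metric.closedBall (0 : ℂ) 1) ≃ₜ X)
    (f : X → Y) (ε : ℝ) (hε : 0 < ε) (hf : IsEpsIsometry ε f)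
    (hemb : Topology.IsEmbedding f) (p : Y) (hp : p ∈ Φ '' diskBoundary) :
    ∃ x ∈ Ψ '' diskBoundary, dist p (f x) < ε := by
  let h : closedBall (0 : ℂ) 1 → ℂ := fun z => (Φ.symm (f (Ψ z)) : ℂ)
  have hc : Continuous h := by
    have := hemb.continuous
    fun_prop
  have hinj : Function.Injective h := fun a b hab =>
    Ψ.injective (hemb.injective (Φ.symm.injective (Subtype.ext hab)))
  have hbd : ∀ d : closedBall (0 : ℂ) 1, ¬ ‖(d : ℂ)‖ < 1 → Ψ d ∈ Ψ '' diskBoundary := by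
    intro d hd
    refine ⟨d, le_antisymm ?_ (not_lt.1 hd), rfl⟩
    exact mem_closedBall_zero_iff.1 d.2
  by_cases hpS : p ∈ Set.range f
  · obtain ⟨x, rfl⟩ := hpS
    refine ⟨x, ?_, by simpa using hε⟩
    obtain ⟨d, rfl⟩ := Ψ.surjective x
    refine hbd d fun hd => ?_
    have h1 := range_mem_nhds h hc hinj d hd
    have h2 : closedBall (0 : ℂ) 1 ∈ 𝓝 (h d) := mem_of_superset h1 (by
      rintro _ ⟨w, rfl⟩
      exact (Φ.symm (f (Ψ w))).2)
    rw [← mem_interior_iff_mem_nhds, interior_closedBall _ one_ne_zero] at h2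
    obtain ⟨b, hb, hbe⟩ := hp
    have h3 : Φ.symm (f (Ψ d)) = b := by rw [← hbe]; simp
    have h4 : ‖h d‖ = 1 := by
      simp only [h]
      rw [h3]
      exact hb
    simp [h4] at h2
  · obtain ⟨x, hx⟩ := hf.1 p
    have hlt : edist p (f x) < ENNReal.ofReal ε := by
      rw [edist_dist]
      exact (ENNReal.ofReal_lt_ofReal_iff hε).2 hx
    rw [hYlen p (f x), iInf_lt_iff] at hlt
    obtain ⟨⟨γ, hγa, hγb⟩, hγ⟩ := hlt
    have hK : IsPreconnected (γ.toFun '' Set.Icc γ.a γ.b) := isPreconnected_Icc.image _ γ.cont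
    haveI : CompactSpace X := Ψ.compactSpace
    have hS : IsClosed (Set.range f) := (isCompact_range hemb.continuous).isClosed
    have hfr : ((γ.toFun '' Set.Icc γ.a γ.b) ∩ frontier (Set.range f)).Nonempty := by
      by_contra hempty
      rw [Set.not_nonempty_iff_eq_empty] at hempty
      have hsub : γ.toFun '' Set.Icc γ.a γ.b ⊆ interior (Set.range f) ∪ (Set.range f)ᶜ := by
        intro y hy
        by_cases hyS : y ∈ Set.range f
        · left
          by_contra hyi
          have : y ∈ (γ.toFun '' Set.Icc γ.a γ.b) ∩ frontier (Set.range f) :=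
            ⟨hy, subset_closure hyS, hyi⟩
          rw [hempty] at this
          exact this
        · exact Or.inr hyS
      have hfx : f x ∈ γ.toFun '' Set.Icc γ.a γ.b := ⟨γ.b, ⟨γ.hab, le_rfl⟩, hγb⟩
      have hpm : p ∈ γ.toFun '' Set.Icc γ.a γ.b := ⟨γ.a, ⟨le_rfl, γ.hab⟩, hγa⟩
      obtain ⟨y, -, hy1, hy2⟩ := hK _ _ isOpen_interior hS.isOpen_compl hsub
        ⟨f x, hfx, (hsub hfx).resolve_right (fun hn => hn (Set.mem_range_self x))⟩
        ⟨p, hpm, hpS⟩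
      exact hy2 (interior_subset hy1)
    obtain ⟨_, ⟨t, ht, rfl⟩, hfront⟩ := hfr
    have hin : γ.toFun t ∈ Set.range f := hS.frontier_subset hfront
    obtain ⟨x', hx'⟩ := hin
    refine ⟨x', ?_, ?_⟩
    · obtain ⟨d, rfl⟩ := Ψ.surjective x'
      refine hbd d fun hd => hfront.2 ?_
      rw [mem_interior_iff_mem_nhds, ← hx']
      have h1 := range_mem_nhds h hc hinj d hd
      have hcont : Continuous fun y : Y => (Φ.symm y : ℂ) := by fun_prop
      refine mem_of_superset (hcont.continuousAt.preimage_mem_nhds h1) ?_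
      rintro y ⟨w, hw⟩
      exact ⟨Ψ w, Φ.symm.injective (Subtype.ext hw)⟩
    · have h1 : edist p (f x') < ENNReal.ofReal ε := by
        refine lt_of_le_of_lt ?_ hγ
        have h2 : edist (γ.toFun γ.a) (γ.toFun t) ≤ γ.length :=
          eVariationOn.edist_le _ ⟨le_rfl, γ.hab⟩ ht
        rw [hγa] at h2
        rw [hx']
        exact h2
      rw [edist_dist] at h1
      exact (ENNReal.ofReal_lt_ofReal_iff hε).1 h1

theorem liminf_boundary_diam
    (X : ℕ → Type) [∀ n, MetricSpace (X n)] (hXlen : ∀ n, IsLengthSpace (X n))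
    (Y : Type) [MetricSpace Y] (hYlen : IsLengthSpace Y)
    -- `Y` is homeomorphic to a closed topological disk, and each `Xₙ` is homeomorphic
    -- to `Y` (hence also to the closed disk):
    (Φ : ↥(Metric.closedBall (0 : ℂ) 1) ≃ₜ Y)
    (Φn : ∀ n, ↥(Metric.closedBall (0 : ℂ) 1) ≃ₜ X n)
    -- an approximately isometric sequence of topological embeddings `fₙ : Xₙ → Y`:
    (f : ∀ n, X n → Y) (ε : ℕ → ℝ) (hε : ∀ n, 0 < ε n) (hε0 : Tendsto ε atTop (𝓝 0))
    (hf : ∀ n, IsEpsIsometry (ε n) (f n))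
    (hemb : ∀ n, Topology.IsEmbedding (f n)) :
    EMetric.diam (Φ '' diskBoundary) ≤
      liminf (fun n => EMetric.diam (Φn n '' diskBoundary)) atTop := by
  have hne : EMetric.diam (Φ '' diskBoundary) ≠ ⊤ := by
    haveI : CompactSpace Y := Φ.compactSpace
    exact (Metric.isBounded_iff_ediam_ne_top).1 (Bornology.IsBounded.all _)
  have key : ∀ n, EMetric.diam (Φ '' diskBoundary) - ENNReal.ofReal (3 * ε n) ≤
      EMetric.diam (Φn n '' diskBoundary) := by
    intro n
    rw [tsub_le_iff_right]
    refine Metric.ediam_le fun p hp q hq => ?_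
    obtain ⟨x, hx, hpx⟩ := boundary_near hYlen Φ (Φn n) (f n) (ε n) (hε n) (hf n) (hemb n) p hp
    obtain ⟨y, hy, hqy⟩ := boundary_near hYlen Φ (Φn n) (f n) (ε n) (hε n) (hf n) (hemb n) q hq
    have h1 := abs_lt.1 ((hf n).2 x y)
    have h2 : dist p q ≤ dist x y + 3 * ε n := by
      have := dist_triangle4 p (f n x) (f n y) q
      rw [dist_comm (f n y) q] at this
      linarith [h1.1]
    calc edist p q = ENNReal.ofReal (dist p q) := edist_dist _ _
      _ ≤ ENNReal.ofReal (dist x y + 3 * ε n) := ENNReal.ofReal_le_ofReal h2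
      _ = edist x y + ENNReal.ofReal (3 * ε n) := by
        rw [ENNReal.ofReal_add dist_nonneg (by linarith [hε n]), edist_dist]
      _ ≤ _ := by
        gcongr
        exact Metric.edist_le_ediam_of_mem hx hy
  have ht : Tendsto (fun n => EMetric.diam (Φ '' diskBoundary) - ENNReal.ofReal (3 * ε n)) atTop
      (𝓝 (EMetric.diam (Φ '' diskBoundary))) := by
    have h1 : Tendsto (fun n => ENNReal.ofReal (3 * ε n)) atTop (𝓝 0) := by
      simpa using ENNReal.tendsto_ofReal (hε0.const_mul 3)
    simpa using ENNReal.Tendsto.sub tendsto_const_nhds h1 (Or.inl hne)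
  rw [← ht.liminf_eq]
  exact liminf_le_liminf (Eventually.of_forall key)
end
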